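/- arXiv:1402.2589 — 7 statements merged into one kernel-verified Lean document; each statement's English description precedes it below -/
import Mathlib

section
/- Let G = (U, W, E) be a bipartite graph with a strong ordering ≺, and let u₀ ≺ u₁ be vertices of U and w₀ ≺ w₁ be vertices of W such that both {u₀, w₁} ∈ E and {u₁, w₀} ∈ E. Then {u₀, w₀} ∈ E and {u₁, w₁} ∈ E, and every edge e of G that crosses at least one (respectively, both) of the edges {u₀, w₀}, {u₁, w₁} also crosses at least one (respectively, both) of the edges {u₀, w₁}, {u₁, w₀}. -/
/-!
The two new edges come from the strong ordering applied to the crossing pair `{u₀, w₁}`,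
`{u₁, w₀}`. The crossing claims use only the orders. If `{u, w}` crosses `{u₀, w₀}` or
`{u₁, w₁}` with the smaller `U`-endpoint, then it crosses `{u₁, w₀}`; with the larger one, it
crosses `{u₀, w₁}`. If it crosses both, it does so from the same side, since opposite sides
would force `u₁ < u < u₀` or `w₁ < w < w₀`; then it crosses `{u₀, w₁}` and `{u₁, w₀}` from
that side too.
-/

/-- Two edges `e = {u, w}` and `e' = {u', w'}` of a bipartite graph (with `u, u'`
in the part `U` and `w, w'` in the part `W`) cross each other if
(`u ≺ u'` and `w' ≺ w`) or (`u' ≺ u` and `w ≺ w'`). -/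
def Crosses {U W : Type*} [LinearOrder U] [LinearOrder W] (e e' : U × W) : Prop :=
  (e.1 < e'.1 ∧ e'.2 < e.2) ∨ (e'.1 < e.1 ∧ e.2 < e'.2)

/-- Given a strong ordering of a bipartite graph (edge relation `E : U → W → Prop`)
and vertices `u₀ ≺ u₁`, `w₀ ≺ w₁` with `{u₀,w₁}` and `{u₁,w₀}` edges, the pairs
`{u₀,w₀}` and `{u₁,w₁}` are also edges, and every edge crossing at least one
(resp. both) of `{u₀,w₀}, {u₁,w₁}` crosses at least one (resp. both) of
`{u₀,w₁}, {u₁,w₀}`. -/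
theorem stmt1 {U W : Type*} [LinearOrder U] [LinearOrder W] (E : U → W → Prop)
    (hstrong : ∀ u u' w w', E u w → E u' w' → u < u' → w' < w → E u w' ∧ E u' w)
    (u₀ u₁ : U) (w₀ w₁ : W) (hu : u₀ < u₁) (hw : w₀ < w₁)
    (h01 : E u₀ w₁) (h10 : E u₁ w₀) :
    E u₀ w₀ ∧ E u₁ w₁ ∧
    ∀ u w, E u w →
      ((Crosses (u, w) (u₀, w₀) ∨ Crosses (u, w) (u₁, w₁)) →
        (Crosses (u, w) (u₀, w₁) ∨ Crosses (u, w) (u₁, w₀))) ∧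
      ((Crosses (u, w) (u₀, w₀) ∧ Crosses (u, w) (u₁, w₁)) →
        (Crosses (u, w) (u₀, w₁) ∧ Crosses (u, w) (u₁, w₀))) := by
  refine ⟨(hstrong _ _ _ _ h01 h10 hu hw).1, (hstrong _ _ _ _ h01 h10 hu hw).2, ?_⟩
  intro u w _
  simp only [Crosses]
  constructor
  · rintro ((⟨h, h'⟩ | ⟨h, h'⟩) | (⟨h, h'⟩ | ⟨h, h'⟩))
    · exact Or.inr (Or.inl ⟨h.trans hu, h'⟩)
    · exact Or.inl (Or.inr ⟨h, h'.trans hw⟩)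
    · exact Or.inr (Or.inl ⟨h, hw.trans h'⟩)
    · exact Or.inl (Or.inr ⟨hu.trans h, h'⟩)
  · rintro ⟨⟨h, h'⟩ | ⟨h, h'⟩, ⟨k, k'⟩ | ⟨k, k'⟩⟩
    · exact ⟨Or.inl ⟨h, k'⟩, Or.inl ⟨k, h'⟩⟩
    · exact absurd (k.trans h) hu.not_gt
    · exact absurd (k'.trans h') hw.not_gt
    · exact ⟨Or.inr ⟨h, k'⟩, Or.inr ⟨k, h'⟩⟩
end

section
/- Let G = (U, W, E) be a bipartite graph with a strong ordering ≺ and let s ≥ 1. Any s-star partition of G that has minimum score (with respect to the lexicographic order on scores (width, edge-crossing number)) is a good s-star partition, i.e., every two distinct stars of it are either non-crossing or interleaving. -/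
/-!
Two stars of a partition of minimum score cannot be replaced by two stars on the same vertices
that are together no wider, cross third stars no more often and cross each other less often
(`IsMinPartition.no_exchange`).  All contradictions come from this.

*Centers on the same side*, say `u < u'` in `U`: if the leaves are not in the order of the
centers, give the `s` smallest of the `2 s` leaves to `u` and the others to `u'`.  The strong
ordering provides the new edges, the width does not increase (`card_hull_split`), crossings with
third stars do not increase (`hits_uncross`), and the two stars no longer cross.  So the leaves are
sorted (`IsMinPartition.sorted_inl`).

*Centers `u` in `U` and `w` in `W`*: suppose that the stars cross and that `u` is not in the scope
of the star of `w`; up to reversing both orders, `u` is left of all leaves of `w`, and some leaf of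
`u` is right of `w`.  Exchanging `w` with the largest leaf `l` of `u` uncrosses the stars, and it
improves the score if every vertex of `W` strictly between `w` and `l` is a leaf of `u`.  By
the sorting of same-side stars, the star of any other vertex in between forms, with one of the two
given stars, a pair of the same kind with fewer vertices in between, so induction on that number
applies (`IsMinPartition.leaves_le`).  The remaining configurations follow by exchanging `U` and
`W` and by reversing the orders.
-/

open scoped Classical

/-- A star in a bipartite graph with parts `U` and `W`: either a center in `U`
together with its set of leaves in `W`, or a center in `W` with leaves in `U`. -/
abbrev BStar (U W : Type*) := (U × Finset W) ⊕ (W × Finset U)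

namespace BStar

variable {U W : Type*}

/-- The vertices in `U` of a star. -/
def uVerts : BStar U W → Finset U
  | .inl (c, _) => {c}
  | .inr (_, L) => L

/-- The vertices in `W` of a star. -/
def wVerts : BStar U W → Finset W
  | .inl (_, L) => L
  | .inr (c, _) => {c}

/-- `X` is a valid `s`-star with respect to the edge relation `E`:
it has `s` leaves, all adjacent to the center. -/
def IsStar (E : U → W → Prop) (s : ℕ) : BStar U W → Prop
  | .inl (c, L) => L.card = s ∧ ∀ w ∈ L, E c w
  | .inr (c, L) => L.card = s ∧ ∀ u ∈ L, E u c

/-- The edges (branches) of a star, as pairs in `U × W`. -/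
noncomputable def edges : BStar U W → Finset (U × W)
  | .inl (c, L) => L.image fun w => (c, w)
  | .inr (c, L) => L.image fun u => (u, c)

/-- An `s`-star partition of the bipartite graph given by `E`: a set of valid
`s`-stars such that every vertex of `U` and of `W` belongs to exactly one star. -/
def IsPartition (E : U → W → Prop) (s : ℕ) (P : Finset (BStar U W)) : Prop :=
  (∀ X ∈ P, IsStar E s X) ∧
  (∀ u : U, ∃! X, X ∈ P ∧ u ∈ uVerts X) ∧
  (∀ w : W, ∃! X, X ∈ P ∧ w ∈ wVerts X)

variable [LinearOrder U] [LinearOrder W]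

/-- Two edges `{u,w}` and `{u',w'}` cross if (`u ≺ u'` and `w' ≺ w`) or
(`u' ≺ u` and `w ≺ w'`). -/
def Cross (e e' : U × W) : Prop :=
  (e.1 < e'.1 ∧ e'.2 < e.2) ∨ (e'.1 < e.1 ∧ e.2 < e'.2)

variable [Fintype U] [Fintype W]

/-- The edge-crossing number of two stars: the number of pairs of crossing
edges, one from each star. -/
noncomputable def crossNum (X Y : BStar U W) : ℕ :=
  ((edges X ×ˢ edges Y).filter fun p => Cross p.1 p.2).card

/-- The part of the scope of a star lying in `U`: all vertices of `U` between
the leftmost and the rightmost leaf (nonempty only for stars centered in `W`). -/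
noncomputable def scopeU : BStar U W → Finset U
  | .inl _ => ∅
  | .inr (_, L) => Finset.univ.filter fun u => ∃ a ∈ L, ∃ b ∈ L, a ≤ u ∧ u ≤ b

/-- The part of the scope of a star lying in `W`. -/
noncomputable def scopeW : BStar U W → Finset W
  | .inl (_, L) => Finset.univ.filter fun w => ∃ a ∈ L, ∃ b ∈ L, a ≤ w ∧ w ≤ b
  | .inr _ => ∅

/-- The width of a star: the cardinality of its scope. -/
noncomputable def width (X : BStar U W) : ℕ := (scopeU X).card + (scopeW X).card

/-- The center of `X` lies in the scope of `Y`. -/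
def CenterInScope : BStar U W → BStar U W → Prop
  | .inl (c, _), Y => c ∈ scopeU Y
  | .inr (c, _), Y => c ∈ scopeW Y

/-- Two stars are interleaving if the center of each lies in the scope of the
other. -/
def Interleaving (X Y : BStar U W) : Prop :=
  CenterInScope X Y ∧ CenterInScope Y X

/-- Two stars are non-crossing if their edge-crossing number is zero. -/
def NonCrossing (X Y : BStar U W) : Prop := crossNum X Y = 0

/-- The score of a partition: the pair (width, total edge-crossing number),
to be compared lexicographically.  (Summing over ordered pairs of distinct
stars counts every unordered pair twice, which does not affect comparisons.) -/
noncomputable def score (P : Finset (BStar U W)) : ℕ × ℕ :=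
  (∑ X ∈ P, width X, ∑ p ∈ P.offDiag, crossNum p.1 p.2)

end BStar

namespace BStar

/-! ### Vertices of stars -/

section Vertices

variable {U W : Type*}

lemma mem_verts_of_mem_edges {Z : BStar U W} {e : U × W} (he : e ∈ edges Z) :
    e.1 ∈ uVerts Z ∧ e.2 ∈ wVerts Z := by
  rcases Z with ⟨c, L⟩ | ⟨c, L⟩ <;> simp only [edges, Finset.mem_image] at he <;>
    obtain ⟨x, hx, rfl⟩ := he <;> simp [uVerts, wVerts, hx]

lemma IsPartition.eq_of_mem_u {E : U → W → Prop} {s : ℕ} {P : Finset (BStar U W)}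
    (hP : IsPartition E s P) {X Y : BStar U W} (hX : X ∈ P) (hY : Y ∈ P) {u : U}
    (h : u ∈ uVerts X) (h' : u ∈ uVerts Y) : X = Y :=
  (hP.2.1 u).unique ⟨hX, h⟩ ⟨hY, h'⟩

lemma IsPartition.eq_of_mem_w {E : U → W → Prop} {s : ℕ} {P : Finset (BStar U W)}
    (hP : IsPartition E s P) {X Y : BStar U W} (hX : X ∈ P) (hY : Y ∈ P) {w : W}
    (h : w ∈ wVerts X) (h' : w ∈ wVerts Y) : X = Y :=
  (hP.2.2 w).unique ⟨hX, h⟩ ⟨hY, h'⟩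

lemma exists_vert (X : BStar U W) : (∃ u, u ∈ uVerts X) ∨ ∃ w, w ∈ wVerts X := by
  rcases X with ⟨c, L⟩ | ⟨c, L⟩
  · exact .inl ⟨c, by simp [uVerts]⟩
  · exact .inr ⟨c, by simp [wVerts]⟩

lemma sum_edges_inl (f : U × W → ℕ) (u : U) (L : Finset W) :
    ∑ e ∈ edges (.inl (u, L)), f e = ∑ w ∈ L, f (u, w) := by
  simp only [edges]
  rw [Finset.sum_image (by intro a _ b _ h; exact (Prod.mk.inj h).2)]

lemma sum_edges_inr (f : U × W → ℕ) (w : W) (L : Finset U) :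
    ∑ e ∈ edges (.inr (w, L)), f e = ∑ u ∈ L, f (u, w) := by
  simp only [edges]
  rw [Finset.sum_image (by intro a _ b _ h; exact (Prod.mk.inj h).1)]

end Vertices

/-! ### Crossing counts -/

section Counts

variable {U W : Type*} [LinearOrder U] [LinearOrder W]

/-- The number of edges of `Z` crossed by the edge `e`. -/
noncomputable def hits (e : U × W) (Z : BStar U W) : ℕ :=
  ((edges Z).filter fun f => Cross e f).card

lemma cross_comm (e f : U × W) : Cross e f ↔ Cross f e := by
  unfold Cross; tauto

lemma crossNum_eq_sum (X Z : BStar U W) : crossNum X Z = ∑ e ∈ edges X, hits e Z := by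
  simp only [crossNum, hits, Finset.card_filter, Finset.sum_product]

lemma crossNum_inl (u : U) (L : Finset W) (Z : BStar U W) :
    crossNum (.inl (u, L)) Z = ∑ w ∈ L, hits (u, w) Z := by
  rw [crossNum_eq_sum, sum_edges_inl]

lemma crossNum_inr (w : W) (L : Finset U) (Z : BStar U W) :
    crossNum (.inr (w, L)) Z = ∑ u ∈ L, hits (u, w) Z := by
  rw [crossNum_eq_sum, sum_edges_inr]

lemma crossNum_comm (X Y : BStar U W) : crossNum X Y = crossNum Y X := by
  simp only [crossNum, Finset.card_filter, Finset.sum_product]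
  rw [Finset.sum_comm]
  simp only [cross_comm]

lemma crossNum_eq_zero_iff (X Y : BStar U W) :
    crossNum X Y = 0 ↔ ∀ e ∈ edges X, ∀ f ∈ edges Y, ¬ Cross e f := by
  simp only [crossNum, Finset.card_eq_zero, Finset.filter_eq_empty_iff, Finset.mem_product]
  exact ⟨fun h e he f hf => h (x := (e, f)) ⟨he, hf⟩, fun h x hx => h x.1 hx.1 x.2 hx.2⟩

end Counts

/-! ### Exchanging two stars of a minimum partition -/

section Exchange

variable {U W : Type*} [LinearOrder U] [LinearOrder W] [Fintype U] [Fintype W]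

/-- `P` is an `s`-star partition of minimum score. -/
def IsMinPartition (E : U → W → Prop) (s : ℕ) (P : Finset (BStar U W)) : Prop :=
  IsPartition E s P ∧
    ∀ Q : Finset (BStar U W), IsPartition E s Q → ¬ toLex (score Q) < toLex (score P)

/-- The strong-ordering property of the two linear orders with respect to `E`. -/
def IsStrong (E : U → W → Prop) : Prop :=
  ∀ u u' w w', E u w → E u' w' → u < u' → w' < w → E u w' ∧ E u' w

lemma sum_offDiag_insert {α : Type*} [DecidableEq α] (c : α → α → ℕ)
    (hc : ∀ a b, c a b = c b a) {a : α} {R : Finset α} (ha : a ∉ R) :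
    ∑ p ∈ (insert a R).offDiag, c p.1 p.2
      = ∑ p ∈ R.offDiag, c p.1 p.2 + 2 * ∑ z ∈ R, c a z := by
  rw [Finset.offDiag_insert ha, Finset.sum_union, Finset.sum_union, Finset.sum_product,
    Finset.sum_product]
  · simp only [Finset.sum_singleton]
    simp only [hc _ a]
    omega
  · rw [Finset.disjoint_left]; rintro ⟨x, y⟩; simp; grind
  · rw [Finset.disjoint_left]; rintro ⟨x, y⟩; simp; grind

/-- In a partition of minimum score, no two stars `X`, `Y` can be replaced by two stars on the
same vertices without increasing width or crossings with third stars while strictly decreasing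
their mutual crossings. -/
lemma IsMinPartition.no_exchange {E : U → W → Prop} {s : ℕ} {P : Finset (BStar U W)}
    (hP : IsMinPartition E s P) {X Y X' Y' : BStar U W} (hX : X ∈ P) (hY : Y ∈ P) (hXY : X ≠ Y)
    (hX' : IsStar E s X') (hY' : IsStar E s Y')
    (hu : ∀ u, (u ∈ uVerts X' ∨ u ∈ uVerts Y') ↔ (u ∈ uVerts X ∨ u ∈ uVerts Y))
    (hw : ∀ w, (w ∈ wVerts X' ∨ w ∈ wVerts Y') ↔ (w ∈ wVerts X ∨ w ∈ wVerts Y))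
    (hdu : ∀ u, u ∈ uVerts X' → u ∉ uVerts Y') (hdw : ∀ w, w ∈ wVerts X' → w ∉ wVerts Y')
    (hwidth : width X' + width Y' ≤ width X + width Y)
    (hcross : ∀ Z ∈ P, Z ≠ X → Z ≠ Y →
      crossNum X' Z + crossNum Y' Z ≤ crossNum X Z + crossNum Y Z)
    (hlt : crossNum X' Y' < crossNum X Y) : False := by
  obtain ⟨⟨hstar, hcu, hcw⟩, hmin⟩ := hP
  have hpart : IsPartition E s P := ⟨hstar, hcu, hcw⟩
  set R := (P.erase X).erase Y with hR
  have memR : ∀ Z, Z ∈ R ↔ Z ∈ P ∧ Z ≠ X ∧ Z ≠ Y := by intro Z; simp [hR]; tauto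
  have hPR : P = insert X (insert Y R) := by
    ext Z; simp only [Finset.mem_insert, memR]
    constructor
    · tauto
    · rintro (rfl | rfl | h) <;> tauto
  -- A star of `R` shares no vertex with `X` or `Y`, hence none with `X'` or `Y'`.
  have sepu : ∀ Z ∈ R, ∀ u ∈ uVerts Z, u ∉ uVerts X' ∧ u ∉ uVerts Y' := by
    intro Z hZ u huZ
    rw [memR] at hZ
    have h1 : u ∉ uVerts X := fun h => hZ.2.1 (hpart.eq_of_mem_u hZ.1 hX huZ h)
    have h2 : u ∉ uVerts Y := fun h => hZ.2.2 (hpart.eq_of_mem_u hZ.1 hY huZ h)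
    have := hu u
    tauto
  have sepw : ∀ Z ∈ R, ∀ w ∈ wVerts Z, w ∉ wVerts X' ∧ w ∉ wVerts Y' := by
    intro Z hZ w hwZ
    rw [memR] at hZ
    have h1 : w ∉ wVerts X := fun h => hZ.2.1 (hpart.eq_of_mem_w hZ.1 hX hwZ h)
    have h2 : w ∉ wVerts Y := fun h => hZ.2.2 (hpart.eq_of_mem_w hZ.1 hY hwZ h)
    have := hw w
    tauto
  have hX'R : X' ∉ R := by
    intro h
    rcases exists_vert X' with ⟨u, h'⟩ | ⟨w, h'⟩
    · exact (sepu _ h u h').1 h'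
    · exact (sepw _ h w h').1 h'
  have hY'R : Y' ∉ R := by
    intro h
    rcases exists_vert Y' with ⟨u, h'⟩ | ⟨w, h'⟩
    · exact (sepu _ h u h').2 h'
    · exact (sepw _ h w h').2 h'
  have hne : X' ≠ Y' := by
    rintro rfl
    rcases exists_vert X' with ⟨u, h'⟩ | ⟨w, h'⟩
    · exact hdu u h' h'
    · exact hdw w h' h'
  have hYR : Y ∉ R := by simp [memR]
  have hXR : X ∉ insert Y R := by simp [memR, hXY]
  have hX'R' : X' ∉ insert Y' R := by simp [hX'R, hne]
  have hQ : IsPartition E s (insert X' (insert Y' R)) := by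
    refine ⟨?_, ?_, ?_⟩
    · intro Z hZ
      simp only [Finset.mem_insert] at hZ
      rcases hZ with rfl | rfl | hZ
      · exact hX'
      · exact hY'
      · exact hstar Z ((memR Z).1 hZ).1
    · intro u
      apply existsUnique_of_exists_of_unique
      · obtain ⟨Z, ⟨hZ, huZ⟩, -⟩ := hcu u
        simp only [Finset.mem_insert]
        by_cases h : u ∈ uVerts X ∨ u ∈ uVerts Y
        · rcases (hu u).2 h with h | h
          · exact ⟨X', .inl rfl, h⟩
          · exact ⟨Y', .inr (.inl rfl), h⟩
        · refine ⟨Z, .inr (.inr ((memR Z).2 ⟨hZ, ?_, ?_⟩)), huZ⟩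
          · rintro rfl; exact h (.inl huZ)
          · rintro rfl; exact h (.inr huZ)
      · rintro A B ⟨hA, huA⟩ ⟨hB, huB⟩
        simp only [Finset.mem_insert] at hA hB
        rcases hA with rfl | rfl | hA <;> rcases hB with rfl | rfl | hB
        · rfl
        · exact absurd huB (hdu u huA)
        · exact absurd huA (sepu _ hB u huB).1
        · exact absurd huA (hdu u huB)
        · rfl
        · exact absurd huA (sepu _ hB u huB).2
        · exact absurd huB (sepu _ hA u huA).1
        · exact absurd huB (sepu _ hA u huA).2
        · exact hpart.eq_of_mem_u ((memR _).1 hA).1 ((memR _).1 hB).1 huA huB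
    · intro w
      apply existsUnique_of_exists_of_unique
      · obtain ⟨Z, ⟨hZ, hwZ⟩, -⟩ := hcw w
        simp only [Finset.mem_insert]
        by_cases h : w ∈ wVerts X ∨ w ∈ wVerts Y
        · rcases (hw w).2 h with h | h
          · exact ⟨X', .inl rfl, h⟩
          · exact ⟨Y', .inr (.inl rfl), h⟩
        · refine ⟨Z, .inr (.inr ((memR Z).2 ⟨hZ, ?_, ?_⟩)), hwZ⟩
          · rintro rfl; exact h (.inl hwZ)
          · rintro rfl; exact h (.inr hwZ)
      · rintro A B ⟨hA, hwA⟩ ⟨hB, hwB⟩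
        simp only [Finset.mem_insert] at hA hB
        rcases hA with rfl | rfl | hA <;> rcases hB with rfl | rfl | hB
        · rfl
        · exact absurd hwB (hdw w hwA)
        · exact absurd hwA (sepw _ hB w hwB).1
        · exact absurd hwA (hdw w hwB)
        · rfl
        · exact absurd hwA (sepw _ hB w hwB).2
        · exact absurd hwB (sepw _ hA w hwA).1
        · exact absurd hwB (sepw _ hA w hwA).2
        · exact hpart.eq_of_mem_w ((memR _).1 hA).1 ((memR _).1 hB).1 hwA hwB
  apply hmin _ hQ
  have hsum : ∑ Z ∈ R, crossNum X' Z + ∑ Z ∈ R, crossNum Y' Z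
      ≤ ∑ Z ∈ R, crossNum X Z + ∑ Z ∈ R, crossNum Y Z := by
    rw [← Finset.sum_add_distrib, ← Finset.sum_add_distrib]
    refine Finset.sum_le_sum fun Z hZ => ?_
    rw [memR] at hZ
    exact hcross Z hZ.1 hZ.2.1 hZ.2.2
  have e1 : ∑ Z ∈ P, width Z = width X + (width Y + ∑ Z ∈ R, width Z) := by
    rw [hPR, Finset.sum_insert hXR, Finset.sum_insert hYR]
  have e2 : ∑ p ∈ P.offDiag, crossNum p.1 p.2 = ∑ p ∈ R.offDiag, crossNum p.1 p.2
      + 2 * ∑ Z ∈ R, crossNum Y Z + 2 * (crossNum X Y + ∑ Z ∈ R, crossNum X Z) := by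
    rw [hPR, sum_offDiag_insert _ crossNum_comm hXR, sum_offDiag_insert _ crossNum_comm hYR,
      Finset.sum_insert hYR]
  rw [Prod.Lex.toLex_lt_toLex]
  simp only [score]
  rw [e1, e2, sum_offDiag_insert _ crossNum_comm hX'R', sum_offDiag_insert _ crossNum_comm hY'R,
      Finset.sum_insert hY'R, Finset.sum_insert hX'R', Finset.sum_insert hY'R]
  omega

end Exchange

/-! ### Two stars with centers on the same side -/

section SameSide

/-- The set of elements between two elements of `L`; the scope of a star is the hull of its
leaf set. -/
noncomputable def hull {α : Type*} [LinearOrder α] [Fintype α] (L : Finset α) : Finset α :=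
  Finset.univ.filter fun x => ∃ a ∈ L, ∃ b ∈ L, a ≤ x ∧ x ≤ b

lemma mem_hull {α : Type*} [LinearOrder α] [Fintype α] {L : Finset α} {x : α} :
    x ∈ hull L ↔ ∃ a ∈ L, ∃ b ∈ L, a ≤ x ∧ x ≤ b := by simp [hull]

lemma exists_initial {α : Type*} [LinearOrder α] (S : Finset α) (k : ℕ) (hk : k ≤ S.card) :
    ∃ A ⊆ S, A.card = k ∧ ∀ a ∈ A, ∀ b ∈ S \ A, a < b := by
  induction k with
  | zero => exact ⟨∅, by simp⟩
  | succ k ih =>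
    obtain ⟨A, hA, hc, hlt⟩ := ih (by omega)
    have hne : (S \ A).Nonempty := by
      rw [← Finset.card_pos, Finset.card_sdiff_of_subset hA]; omega
    have hm := (S \ A).min'_mem hne
    have hle : ∀ b ∈ S \ A, (S \ A).min' hne ≤ b := fun b hb => Finset.min'_le _ b hb
    generalize (S \ A).min' hne = m at hm hle
    simp only [Finset.mem_sdiff] at hm hle hlt
    refine ⟨insert m A, ?_, ?_, ?_⟩
    · exact Finset.insert_subset hm.1 hA
    · rw [Finset.card_insert_of_notMem hm.2, hc]
    · simp only [Finset.mem_insert, Finset.mem_sdiff, not_or]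
      rintro a (rfl | ha) b ⟨hb, hbm, hbA⟩
      · exact lt_of_le_of_ne (hle b ⟨hb, hbA⟩) (Ne.symm hbm)
      · exact hlt a ha b ⟨hb, hbA⟩

/-- An inequality between "paired" terms sums up over two sets of equal size: average it over
all pairs. -/
lemma sum_add_sum_le {α : Type*} {A B : Finset α} (h : A.card = B.card) {f g f' g' : α → ℕ}
    (hle : ∀ a ∈ A, ∀ b ∈ B, f a + g b ≤ f' a + g' b) :
    ∑ a ∈ A, f a + ∑ b ∈ B, g b ≤ ∑ a ∈ A, f' a + ∑ b ∈ B, g' b := by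
  have key : ∑ a ∈ A, ∑ b ∈ B, (f a + g b) ≤ ∑ a ∈ A, ∑ b ∈ B, (f' a + g' b) :=
    Finset.sum_le_sum fun a ha => Finset.sum_le_sum fun b hb => hle a ha b hb
  simp only [Finset.sum_add_distrib, Finset.sum_const, smul_eq_mul, ← h] at key
  rw [← Finset.mul_sum, ← Finset.mul_sum, ← mul_add, ← mul_add] at key
  rcases Nat.eq_zero_or_pos A.card with h0 | h0
  · have hB : B.card = 0 := by omega
    rw [Finset.card_eq_zero] at h0 hB
    simp [h0, hB]
  · exact Nat.le_of_mul_le_mul_left key h0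

variable {U W : Type*} [LinearOrder U] [LinearOrder W]

/-- Uncrossing two edges does not increase the number of crossings with a third party. -/
lemma hits_uncross {u u' : U} {a b : W} (hu : u < u') (hab : a < b) (Z : BStar U W) :
    hits (u, a) Z + hits (u', b) Z ≤ hits (u', a) Z + hits (u, b) Z := by
  simp only [hits, Finset.card_filter]
  rw [← Finset.sum_add_distrib, ← Finset.sum_add_distrib]
  refine Finset.sum_le_sum fun z _ => ?_
  obtain ⟨p, q⟩ := z
  simp only [Cross]
  grind

variable [Fintype U] [Fintype W]

lemma width_inl (u : U) (L : Finset W) : width (.inl (u, L) : BStar U W) = (hull L).card := by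
  simp [width, scopeU, scopeW, hull]

lemma width_inr (w : W) (L : Finset U) : width (.inr (w, L) : BStar U W) = (hull L).card := by
  simp [width, scopeU, scopeW, hull]

/-- Let `L`, `L'` split a set, not with all of `L` below `L'`.  Splitting it instead into a lower
part `A` of size `|L'|` and an upper part `B` of size `|L|` does not increase the total width. -/
lemma card_hull_split {A B L L' : Finset W} (hunion : A ∪ B = L ∪ L')
    (hA : A.card = L'.card) (hB : B.card = L.card) (hlt : ∀ a ∈ A, ∀ b ∈ B, a < b)
    (hx : ∃ w ∈ L, ∃ w' ∈ L', w' < w) :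
    (hull A).card + (hull B).card ≤ (hull L).card + (hull L').card := by
  have hmem : ∀ x, (x ∈ A ∨ x ∈ B) ↔ (x ∈ L ∨ x ∈ L') := by
    intro x; rw [← Finset.mem_union, hunion, Finset.mem_union]
  by_cases hd : Disjoint (hull L) (hull L')
  · have hLL : ∀ x ∈ L', ∀ y ∈ L, x < y := by
      obtain ⟨w, hw, w', hw', hww⟩ := hx
      rw [Finset.disjoint_left] at hd
      simp only [mem_hull] at hd
      intro x hx y hy
      by_contra! hxy
      by_cases hyw : w' ≤ y
      · exact hd ⟨y, hy, y, hy, le_rfl, le_rfl⟩ ⟨w', hw', x, hx, hyw, hxy⟩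
      · push Not at hyw
        exact hd ⟨y, hy, w, hw, hyw.le, hww.le⟩ ⟨w', hw', w', hw', le_rfl, le_rfl⟩
    -- The scopes are disjoint and in the wrong order: the splitting just swaps `L` and `L'`.
    have hAL : L' ⊆ A := by
      intro x hx
      by_contra hxA
      have hxB : x ∈ B := ((hmem x).2 (.inr hx)).resolve_left hxA
      -- then `A ⊆ L' \ {x}`, which is too small
      have hsub : A ⊆ L'.erase x := by
        intro a ha
        have hax := hlt a ha x hxB
        rw [Finset.mem_erase]
        refine ⟨hax.ne, ?_⟩
        rcases (hmem a).1 (.inl ha) with h | h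
        · exact absurd (hLL x hx a h) hax.not_gt
        · exact h
      have := Finset.card_le_card hsub
      rw [Finset.card_erase_of_mem hx] at this
      have := Finset.card_pos.2 ⟨x, hx⟩
      omega
    have hA' : L' = A := Finset.eq_of_subset_of_card_le hAL hA.le
    have hBL : B ⊆ L := by
      intro b hb
      rcases (hmem b).1 (.inr hb) with h | h
      · exact h
      · exact absurd (hlt b (hAL h) b hb) (lt_irrefl b)
    have hB' : B = L := Finset.eq_of_subset_of_card_le hBL hB.ge
    rw [hA', hB', add_comm]
  · rw [Finset.not_disjoint_iff] at hd
    obtain ⟨m, hm, hm'⟩ := hd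
    rw [mem_hull] at hm hm'
    obtain ⟨a₁, ha₁, b₁, hb₁, h₁, h₁'⟩ := hm
    obtain ⟨a₂, ha₂, b₂, hb₂, h₂, h₂'⟩ := hm'
    have hdAB : Disjoint (hull A) (hull B) := by
      rw [Finset.disjoint_left]
      intro x hx hx'
      rw [mem_hull] at hx hx'
      obtain ⟨_, _, b, hb, _, h⟩ := hx
      obtain ⟨a, ha, _, _, h', _⟩ := hx'
      exact absurd (hlt b hb a ha) (not_lt.2 (h'.trans h))
    rw [← Finset.card_union_of_disjoint hdAB]
    refine le_trans (Finset.card_le_card ?_) (Finset.card_union_le _ _)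
    have hS : hull A ∪ hull B ⊆ hull (L ∪ L') := by
      rw [← hunion]
      intro x
      simp only [Finset.mem_union, mem_hull]
      grind
    refine hS.trans ?_
    intro x
    simp only [Finset.mem_union, mem_hull]
    rintro ⟨a, ha, b, hb, hax, hxb⟩
    rcases le_total x m with hxm | hxm
    · rcases ha with ha | ha
      · exact .inl ⟨a, ha, b₁, hb₁, hax, hxm.trans h₁'⟩
      · exact .inr ⟨a, ha, b₂, hb₂, hax, hxm.trans h₂'⟩
    · rcases hb with hb | hb
      · exact .inl ⟨a₁, ha₁, b, hb, h₁.trans hxm, hxb⟩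
      · exact .inr ⟨a₂, ha₂, b, hb, h₂.trans hxm, hxb⟩

/-- Two stars of a minimum partition with centers in `U` have their leaves in the order of
their centers: otherwise redistribute the leaves, giving the `s` smallest ones to the smaller
center. -/
lemma IsMinPartition.sorted_inl {E : U → W → Prop} {s : ℕ} {P : Finset (BStar U W)}
    (hE : IsStrong E) (hP : IsMinPartition E s P) {u u' : U} {L L' : Finset W}
    (hX : .inl (u, L) ∈ P) (hY : .inl (u', L') ∈ P) (huu : u < u') :
    ∀ w ∈ L, ∀ w' ∈ L', w < w' := by
  by_contra! hcon
  obtain ⟨w, hw, w', hw', hle⟩ := hcon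
  have hne : (.inl (u, L) : BStar U W) ≠ .inl (u', L') := by
    intro h; simp at h; exact huu.ne h.1
  have hdisj : Disjoint L L' := by
    rw [Finset.disjoint_left]
    intro x hx hx'
    exact hne (hP.1.eq_of_mem_w hX hY (w := x) hx hx')
  have hww : w' < w := lt_of_le_of_ne hle (fun h => Finset.disjoint_left.1 hdisj hw (h ▸ hw'))
  obtain ⟨hLc, hLE⟩ : L.card = s ∧ ∀ w ∈ L, E u w := hP.1.1 _ hX
  obtain ⟨hLc', hLE'⟩ : L'.card = s ∧ ∀ w ∈ L', E u' w := hP.1.1 _ hY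
  have hcard : (L ∪ L').card = s + s := by rw [Finset.card_union_of_disjoint hdisj, hLc, hLc']
  obtain ⟨A, hAS, hAc, hlt⟩ := exists_initial (L ∪ L') s (by omega)
  set B := (L ∪ L') \ A with hB
  have hBc : B.card = s := by rw [hB, Finset.card_sdiff_of_subset hAS]; omega
  have hAB : Disjoint A B := Finset.disjoint_sdiff
  have hun : A ∪ B = L ∪ L' := Finset.union_sdiff_of_subset hAS
  have hmem : ∀ x, (x ∈ A ∨ x ∈ B) ↔ (x ∈ L ∨ x ∈ L') := by
    intro x; rw [← Finset.mem_union, hun, Finset.mem_union]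
  have hnAB : ∀ x, x ∈ A → x ∉ B := fun x h => Finset.disjoint_left.1 hAB h
  have hnLL : ∀ x, x ∈ L → x ∉ L' := fun x h => Finset.disjoint_left.1 hdisj h
  -- The leaves that change their center: `L ∩ B` and `L' ∩ A`, equally many.
  have cA : (A ∩ L).card + (A ∩ L').card = A.card := by
    rw [← Finset.card_union_of_disjoint]
    · congr 1; ext x; have := hmem x; simp only [Finset.mem_union, Finset.mem_inter]; tauto
    · exact hdisj.mono Finset.inter_subset_right Finset.inter_subset_right
  have cL : (A ∩ L).card + (B ∩ L).card = L.card := by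
    rw [← Finset.card_union_of_disjoint]
    · congr 1; ext x; have := hmem x; simp only [Finset.mem_union, Finset.mem_inter]; tauto
    · exact hAB.mono Finset.inter_subset_left Finset.inter_subset_left
  have hk : (A ∩ L').card = (B ∩ L).card := by omega
  have sumA : ∀ f : W → ℕ, ∑ x ∈ A, f x = ∑ x ∈ A ∩ L, f x + ∑ x ∈ A ∩ L', f x := by
    intro f
    rw [← Finset.sum_union (hdisj.mono Finset.inter_subset_right Finset.inter_subset_right)]
    congr 1; ext x; have := hmem x; simp only [Finset.mem_union, Finset.mem_inter]; tauto
  have sumB : ∀ f : W → ℕ, ∑ x ∈ B, f x = ∑ x ∈ B ∩ L, f x + ∑ x ∈ B ∩ L', f x := by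
    intro f
    rw [← Finset.sum_union (hdisj.mono Finset.inter_subset_right Finset.inter_subset_right)]
    congr 1; ext x; have := hmem x; simp only [Finset.mem_union, Finset.mem_inter]; tauto
  have sumL : ∀ f : W → ℕ, ∑ x ∈ L, f x = ∑ x ∈ A ∩ L, f x + ∑ x ∈ B ∩ L, f x := by
    intro f
    rw [← Finset.sum_union (hAB.mono Finset.inter_subset_left Finset.inter_subset_left)]
    congr 1; ext x; have := hmem x; simp only [Finset.mem_union, Finset.mem_inter]; tauto
  have sumL' : ∀ f : W → ℕ, ∑ x ∈ L', f x = ∑ x ∈ A ∩ L', f x + ∑ x ∈ B ∩ L', f x := by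
    intro f
    rw [← Finset.sum_union (hAB.mono Finset.inter_subset_left Finset.inter_subset_left)]
    congr 1; ext x; have := hmem x; simp only [Finset.mem_union, Finset.mem_inter]; tauto
  refine hP.no_exchange hX hY hne (X' := .inl (u, A)) (Y' := .inl (u', B)) ⟨hAc, ?_⟩ ⟨hBc, ?_⟩
    (fun _ => Iff.rfl) hmem ?_ hnAB ?_ ?_ ?_
  · intro a ha
    rcases (hmem a).1 (.inl ha) with h | h
    · exact hLE a h
    · have h1 : 0 < (B ∩ L).card := by
        rw [← hk, Finset.card_pos]; exact ⟨a, Finset.mem_inter.2 ⟨ha, h⟩⟩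
      obtain ⟨b, hb⟩ := Finset.card_pos.1 h1
      rw [Finset.mem_inter] at hb
      exact (hE u u' b a (hLE b hb.2) (hLE' a h) huu (hlt a ha b hb.1)).1
  · intro b hb
    rcases (hmem b).1 (.inr hb) with h | h
    · have h1 : 0 < (A ∩ L').card := by
        rw [hk, Finset.card_pos]; exact ⟨b, Finset.mem_inter.2 ⟨hb, h⟩⟩
      obtain ⟨a, ha⟩ := Finset.card_pos.1 h1
      rw [Finset.mem_inter] at ha
      exact (hE u u' b a (hLE b h) (hLE' a ha.2) huu (hlt a ha.1 b hb)).2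
    · exact hLE' b h
  · intro x
    simp only [uVerts, Finset.mem_singleton]
    rintro rfl; exact huu.ne
  · simp only [width_inl]
    exact card_hull_split hun (by omega) (by omega) hlt ⟨w, hw, w', hw', hww⟩
  · intro Z _ _ _
    simp only [crossNum_inl]
    rw [sumA, sumB, sumL, sumL']
    have := sum_add_sum_le hk (f := fun a => hits (u, a) Z) (g := fun b => hits (u', b) Z)
      (f' := fun a => hits (u', a) Z) (g' := fun b => hits (u, b) Z) (by
        intro a ha b hb
        rw [Finset.mem_inter] at ha hb
        exact hits_uncross huu (hlt a ha.1 b hb.1) Z)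
    simp only at this
    omega
  · have h0 : crossNum (.inl (u, A) : BStar U W) (.inl (u', B)) = 0 := by
      rw [crossNum_eq_zero_iff]
      simp only [edges, Finset.mem_image]
      rintro _ ⟨a, ha, rfl⟩ _ ⟨b, hb, rfl⟩ (⟨_, h⟩ | ⟨h, _⟩)
      · exact absurd h (hlt a ha b hb).not_gt
      · exact absurd h huu.not_gt
    rw [h0, Nat.pos_iff_ne_zero]
    intro h
    rw [crossNum_eq_zero_iff] at h
    exact h (u, w) (by simp [edges, hw]) (u', w') (by simp [edges, hw']) (.inl ⟨huu, hww⟩)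

end SameSide

/-! ### Symmetries -/

section Symmetry

variable {U W : Type*}

lemma mem_map_swap {P : Finset (BStar U W)} {X : BStar W U} :
    X ∈ P.map (Equiv.sumComm _ _).toEmbedding ↔ X.swap ∈ P := by
  simp only [Finset.mem_map_equiv]; rfl

lemma uVerts_swap (X : BStar U W) : uVerts X.swap = wVerts X := by
  rcases X with ⟨c, L⟩ | ⟨c, L⟩ <;> rfl

lemma wVerts_swap (X : BStar U W) : wVerts X.swap = uVerts X := by
  rcases X with ⟨c, L⟩ | ⟨c, L⟩ <;> rfl

lemma IsPartition.swap {E : U → W → Prop} {s : ℕ} {P : Finset (BStar U W)}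
    (hP : IsPartition E s P) :
    IsPartition (fun w u => E u w) s (P.map (Equiv.sumComm _ _).toEmbedding) := by
  obtain ⟨h1, h2, h3⟩ := hP
  refine ⟨?_, ?_, ?_⟩
  · intro X hX
    have := h1 _ (mem_map_swap.1 hX)
    rcases X with ⟨c, L⟩ | ⟨c, L⟩ <;> exact this
  · intro w
    obtain ⟨X, ⟨hX, hw⟩, huniq⟩ := h3 w
    refine ⟨X.swap, ⟨mem_map_swap.2 (by simpa using hX), by rwa [uVerts_swap]⟩, ?_⟩
    rintro Y ⟨hY, hwY⟩
    rw [← huniq Y.swap ⟨mem_map_swap.1 hY, by rwa [wVerts_swap]⟩, Sum.swap_swap]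
  · intro u
    obtain ⟨X, ⟨hX, hu⟩, huniq⟩ := h2 u
    refine ⟨X.swap, ⟨mem_map_swap.2 (by simpa using hX), by rwa [wVerts_swap]⟩, ?_⟩
    rintro Y ⟨hY, huY⟩
    rw [← huniq Y.swap ⟨mem_map_swap.1 hY, by rwa [uVerts_swap]⟩, Sum.swap_swap]

variable [LinearOrder U] [LinearOrder W]

lemma edges_swap (X : BStar U W) : edges X.swap = (edges X).image Prod.swap := by
  rcases X with ⟨c, L⟩ | ⟨c, L⟩ <;> ext ⟨a, b⟩ <;> simp [edges]

lemma crossNum_swap (X Y : BStar U W) : crossNum X.swap Y.swap = crossNum X Y := by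
  have hinj : ∀ S : Finset (U × W), Set.InjOn Prod.swap (S : Set (U × W)) :=
    fun S => Prod.swap_injective.injOn
  simp only [crossNum, Finset.card_filter, Finset.sum_product, edges_swap]
  rw [Finset.sum_image (hinj _)]
  refine Finset.sum_congr rfl fun e _ => ?_
  rw [Finset.sum_image (hinj _)]
  refine Finset.sum_congr rfl fun f _ => ?_
  simp only [Cross, Prod.fst_swap, Prod.snd_swap]
  congr 1
  rw [eq_iff_iff]; tauto

lemma IsStrong.swap {E : U → W → Prop} (hE : IsStrong E) : IsStrong (fun w u => E u w) :=
  fun w₁ w₂ u₁ u₂ h₁ h₂ hw hu => hE u₂ u₁ w₂ w₁ h₂ h₁ hu hw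

/-- The reversed linear order, on the same type. -/
abbrev revOrder (α : Type*) [LinearOrder α] : LinearOrder α :=
  inferInstanceAs (LinearOrder αᵒᵈ)

lemma cross_rev (e f : U × W) : @Cross U W (revOrder U) (revOrder W) e f ↔ Cross e f :=
  or_comm.trans Iff.rfl

lemma crossNum_rev (X Y : BStar U W) :
    @crossNum U W (revOrder U) (revOrder W) X Y = crossNum X Y := by
  unfold crossNum
  congr 1
  ext p
  simp only [Finset.mem_filter, cross_rev]

lemma IsStrong.rev {E : U → W → Prop} (hE : IsStrong E) :
    @IsStrong U W (revOrder U) (revOrder W) E :=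
  fun u u' w w' h h' hu hw => (hE u' u w' w h' h hu hw).symm

variable [Fintype U] [Fintype W]

lemma width_swap (X : BStar U W) : width X.swap = width X := by
  rcases X with ⟨c, L⟩ | ⟨c, L⟩ <;> simp [width_inl, width_inr]

lemma score_swap (P : Finset (BStar U W)) :
    score (P.map (Equiv.sumComm _ _).toEmbedding) = score P := by
  simp only [score]
  refine Prod.ext ?_ ?_
  · simp only [Finset.sum_map]
    exact Finset.sum_congr rfl fun X _ => width_swap X
  · symm
    refine Finset.sum_bij (fun p _ => (p.1.swap, p.2.swap)) ?_ ?_ ?_ ?_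
    · rintro ⟨X, Y⟩ h
      simp only [Finset.mem_offDiag, mem_map_swap, Sum.swap_swap] at h ⊢
      exact ⟨h.1, h.2.1, fun h' => h.2.2 (by simpa using congrArg Sum.swap h')⟩
    · rintro ⟨X, Y⟩ _ ⟨X', Y'⟩ _ h
      simp only [Prod.mk.injEq] at h
      exact Prod.ext (by simpa using congrArg Sum.swap h.1) (by simpa using congrArg Sum.swap h.2)
    · rintro ⟨X, Y⟩ h
      simp only [Finset.mem_offDiag, mem_map_swap] at h
      refine ⟨(X.swap, Y.swap), ?_, by simp⟩
      simp only [Finset.mem_offDiag]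
      exact ⟨h.1, h.2.1, fun h' => h.2.2 (by simpa using congrArg Sum.swap h')⟩
    · rintro ⟨X, Y⟩ _
      exact (crossNum_swap X Y).symm

/-- Exchanging the roles of `U` and `W` preserves minimum partitions. -/
lemma IsMinPartition.swap {E : U → W → Prop} {s : ℕ} {P : Finset (BStar U W)}
    (hP : IsMinPartition E s P) :
    IsMinPartition (fun w u => E u w) s (P.map (Equiv.sumComm _ _).toEmbedding) := by
  refine ⟨hP.1.swap, fun Q hQ hlt => hP.2 _ hQ.swap ?_⟩
  rwa [score_swap, ← score_swap P]

lemma hull_rev {α : Type*} [LinearOrder α] [Fintype α] (L : Finset α) :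
    @hull α (revOrder α) _ L = hull L := by
  ext x
  refine (@mem_hull α (revOrder α) _ L x).trans (Iff.trans ?_ mem_hull.symm)
  exact ⟨fun ⟨a, ha, b, hb, h, h'⟩ => ⟨b, hb, a, ha, h', h⟩,
    fun ⟨a, ha, b, hb, h, h'⟩ => ⟨b, hb, a, ha, h', h⟩⟩

lemma width_rev (X : BStar U W) : @width U W (revOrder U) (revOrder W) _ _ X = width X := by
  rcases X with ⟨c, L⟩ | ⟨c, L⟩
  · exact (@width_inl U W (revOrder U) (revOrder W) _ _ c L).trans
      ((congrArg _ (hull_rev L)).trans (width_inl c L).symm)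
  · exact (@width_inr U W (revOrder U) (revOrder W) _ _ c L).trans
      ((congrArg _ (hull_rev L)).trans (width_inr c L).symm)

lemma score_rev (P : Finset (BStar U W)) :
    @score U W (revOrder U) (revOrder W) _ _ P = score P := by
  unfold score
  simp only [width_rev, crossNum_rev]

/-- Reversing both orders preserves minimum partitions. -/
lemma IsMinPartition.rev {E : U → W → Prop} {s : ℕ} {P : Finset (BStar U W)}
    (hP : IsMinPartition E s P) :
    @IsMinPartition U W (revOrder U) (revOrder W) _ _ E s P := by
  refine ⟨hP.1, fun Q hQ hlt => hP.2 Q hQ ?_⟩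
  rwa [score_rev, score_rev] at hlt

lemma IsMinPartition.sorted_inr {E : U → W → Prop} {s : ℕ} {P : Finset (BStar U W)}
    (hE : IsStrong E) (hP : IsMinPartition E s P) {w w' : W} {L L' : Finset U}
    (hX : .inr (w, L) ∈ P) (hY : .inr (w', L') ∈ P) (hww : w < w') :
    ∀ u ∈ L, ∀ u' ∈ L', u < u' :=
  hP.swap.sorted_inl hE.swap (mem_map_swap.2 hX) (mem_map_swap.2 hY) hww

end Symmetry

/-! ### Two stars with centers on different sides -/

section OppositeSides

variable {U W : Type*} [LinearOrder U] [LinearOrder W] [Fintype U] [Fintype W]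

/-- If `u` lies left of all leaves of the star centered at `w`, then all leaves of the star
centered at `u` lie left of `w`.  Otherwise, take a violating pair with the fewest vertices of
`W` between `w` and the largest leaf `l` of `u`.  All these vertices are leaves of `u`, since the
star of any other one gives a smaller violating pair.  Hence exchanging `l` and `w` does not
increase the width, removes the crossings between both stars, and changes no other crossing. -/
lemma IsMinPartition.leaves_le {E : U → W → Prop} {s : ℕ} {P : Finset (BStar U W)}
    (hs : 1 ≤ s) (hE : IsStrong E) (hP : IsMinPartition E s P) (n : ℕ) :
    ∀ {u : U} {L : Finset W} {w : W} {L' : Finset U},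
      .inl (u, L) ∈ P → .inr (w, L') ∈ P → (∀ x ∈ L', u < x) →
      (Finset.univ.filter fun q => w < q ∧ ∃ l ∈ L, q ≤ l).card = n → ∀ l ∈ L, l ≤ w := by
  induction n using Nat.strong_induction_on with
  | _ n ih =>
  intro u L w L' hX hY hu hn
  by_contra! hcon
  obtain ⟨l₀, hl₀, hwl₀⟩ := hcon
  obtain ⟨hLc, hLE⟩ : L.card = s ∧ ∀ w ∈ L, E u w := hP.1.1 _ hX
  obtain ⟨hLc', hLE'⟩ : L'.card = s ∧ ∀ u ∈ L', E u w := hP.1.1 _ hY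
  have hne : (.inl (u, L) : BStar U W) ≠ .inr (w, L') := by simp
  have hwL : w ∉ L := fun h =>
    hne (hP.1.eq_of_mem_w hX hY (w := w) h (by simp [wVerts]))
  have huL' : u ∉ L' := fun h => (hu u h).ne rfl
  -- the largest leaf of `u`
  obtain ⟨l, hl, hmax⟩ : ∃ l ∈ L, ∀ x ∈ L, x ≤ l :=
    ⟨L.max' ⟨l₀, hl₀⟩, L.max'_mem _, fun x hx => L.le_max' x hx⟩
  have hwl : w < l := hwl₀.trans_le (hmax l₀ hl₀)
  have hL'ne : L'.Nonempty := by rw [← Finset.card_pos]; omega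
  obtain ⟨x₀, hx₀⟩ := hL'ne
  have hgap : ∀ q, w < q → q ≤ l → q ∈ L := by
    intro q hwq hql
    by_contra hqL
    have hql' : q < l := lt_of_le_of_ne hql (fun h => hqL (h ▸ hl))
    obtain ⟨Z, ⟨hZ, hqZ⟩, -⟩ := hP.1.2.2 q
    rcases Z with ⟨c, M⟩ | ⟨c, M⟩
    · -- `q` is a leaf of `c`: then `c < u` and `M` lies below `L`
      have hqM : q ∈ M := hqZ
      have hcu : c < u := by
        rcases lt_trichotomy c u with h | h | h
        · exact h
        · subst h
          have := hP.1.eq_of_mem_u hX hZ (u := c) (by simp [uVerts]) (by simp [uVerts])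
          simp only [Sum.inl.injEq, Prod.mk.injEq, true_and] at this
          exact absurd (this ▸ hqM) hqL
        · exact absurd (hP.sorted_inl hE hX hZ h l hl q hqM) hql'.not_gt
      have hML := hP.sorted_inl hE hZ hX hcu
      refine absurd (ih _ ?_ hZ hY (fun x hx => hcu.trans (hu x hx)) rfl q hqM) hwq.not_ge
      rw [← hn]
      apply Finset.card_lt_card
      rw [Finset.ssubset_iff_of_subset]
      · refine ⟨l, by simp only [Finset.mem_filter]; exact ⟨by simp, hwl, l, hl, le_rfl⟩, ?_⟩
        simp only [Finset.mem_filter]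
        rintro ⟨-, -, m, hm, hlm⟩
        exact absurd (hML m hm l hl) hlm.not_gt
      · intro x
        simp only [Finset.mem_filter]
        rintro ⟨h, hwx, m, hm, hxm⟩
        exact ⟨h, hwx, l, hl, hxm.trans (hML m hm l hl).le⟩
    · -- `q` is a center: its leaves lie to the right of `L'`
      have hqc : q = c := by simpa [wVerts] using hqZ
      subst hqc
      have hL'M := hP.sorted_inr hE hY hZ hwq
      refine absurd (ih _ ?_ hX hZ (fun x hx => (hu x₀ hx₀).trans (hL'M x₀ hx₀ x hx)) rfl l hl)
        hql'.not_ge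
      rw [← hn]
      apply Finset.card_lt_card
      rw [Finset.ssubset_iff_of_subset]
      · refine ⟨q, by simp only [Finset.mem_filter]; exact ⟨by simp, hwq, l, hl, hql⟩, ?_⟩
        simp
      · intro x
        simp only [Finset.mem_filter]
        rintro ⟨h, hwx, h'⟩
        exact ⟨h, hwq.trans hwx, h'⟩
  have hwe : w ∉ L.erase l := fun h => hwL (Finset.mem_of_mem_erase h)
  have hlt : ∀ x ∈ L.erase l, x < l := fun x hx =>
    lt_of_le_of_ne (hmax x (Finset.mem_of_mem_erase hx)) (Finset.ne_of_mem_erase hx)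
  refine hP.no_exchange hX hY hne (X' := .inl (u, insert w (L.erase l))) (Y' := .inr (l, L'))
    ⟨?_, ?_⟩ ⟨hLc', ?_⟩ (fun _ => Iff.rfl) ?_ ?_ ?_ ?_ ?_ ?_
  · rw [Finset.card_insert_of_notMem hwe, Finset.card_erase_of_mem hl]; omega
  · intro x hx
    rcases Finset.mem_insert.1 hx with rfl | hx
    · exact (hE u x₀ l x (hLE l hl) (hLE' x₀ hx₀) (hu x₀ hx₀) hwl).1
    · exact hLE x (Finset.mem_of_mem_erase hx)
  · intro x hx
    exact (hE u x l w (hLE l hl) (hLE' x hx) (hu x hx) hwl).2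
  · intro x
    simp only [wVerts, Finset.mem_insert, Finset.mem_erase, Finset.mem_singleton]
    by_cases h : x = l
    · subst h; simp [hl]
    · simp only [h]; tauto
  · intro x
    simp only [uVerts, Finset.mem_singleton]
    rintro rfl; exact huL'
  · intro x
    simp only [wVerts, Finset.mem_insert, Finset.mem_singleton]
    rintro (rfl | hx)
    · exact hwl.ne
    · exact (hlt x hx).ne
  · simp only [width_inl, width_inr]
    have hsub : hull (insert w (L.erase l)) ⊆ insert w ((hull L).erase l) := by
      intro q
      simp only [mem_hull, Finset.mem_insert, Finset.mem_erase]
      rintro ⟨a, ha, b, hb, haq, hqb⟩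
      have hql : q < l := by
        rcases hb with rfl | hb
        · exact hqb.trans_lt hwl
        · exact hqb.trans_lt (hlt b (Finset.mem_erase.2 hb))
      rcases ha with rfl | ha
      · rcases haq.eq_or_lt with h | h
        · exact .inl h.symm
        · exact .inr ⟨hql.ne, q, hgap q h hql.le, q, hgap q h hql.le, le_rfl, le_rfl⟩
      · exact .inr ⟨hql.ne, a, ha.2, l, hl, haq, hql.le⟩
    have h1 := Finset.card_le_card hsub
    have h2 := Finset.card_insert_le w ((hull L).erase l)
    have hlh : l ∈ hull L := mem_hull.2 ⟨l, hl, l, hl, le_rfl, le_rfl⟩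
    have h3 := Finset.card_erase_of_mem hlh
    have h4 := Finset.card_pos.2 ⟨l, hlh⟩
    omega
  · -- Edges of third stars have no endpoint in `[w, l]`, so they cannot tell `w` from `l`.
    intro Z hZ hZX hZY
    have hsame : ∀ x : U, hits (x, w) Z = hits (x, l) Z := by
      intro x
      unfold hits
      congr 1
      apply Finset.filter_congr
      rintro ⟨p, q⟩ hpq
      have hq : q ∈ wVerts Z := (mem_verts_of_mem_edges hpq).2
      have hqL : q ∉ L := fun h => hZX (hP.1.eq_of_mem_w hZ hX hq h)
      have hqw : q ≠ w := fun h => hZY (hP.1.eq_of_mem_w hZ hY hq (by simp [wVerts, h]))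
      have hiff : q < w ↔ q < l := by
        constructor
        · exact fun h => h.trans hwl
        · intro h
          by_contra! h'
          exact hqL (hgap q (lt_of_le_of_ne h' (Ne.symm hqw)) h.le)
      have hiff' : w < q ↔ l < q := by
        constructor
        · intro h
          by_contra! h'
          exact hqL (hgap q h h')
        · exact fun h => hwl.trans h
      simp only [Cross, hiff, hiff']
    simp only [crossNum_inl, crossNum_inr]
    rw [Finset.sum_insert hwe, hsame u, Finset.add_sum_erase L (fun x => hits (u, x) Z) hl]
    simp only [hsame, le_refl]
  · have h0 : crossNum (.inl (u, insert w (L.erase l)) : BStar U W) (.inr (l, L')) = 0 := by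
      rw [crossNum_eq_zero_iff]
      simp only [edges, Finset.mem_image]
      rintro _ ⟨a, ha, rfl⟩ _ ⟨b, hb, rfl⟩ (⟨_, h⟩ | ⟨h, _⟩)
      · rcases Finset.mem_insert.1 ha with rfl | ha
        · exact absurd h hwl.not_gt
        · exact absurd h (hlt a ha).not_gt
      · exact absurd h (hu b hb).not_gt
    rw [h0, Nat.pos_iff_ne_zero]
    intro h
    rw [crossNum_eq_zero_iff] at h
    exact h (u, l) (by simp [edges, hl]) (x₀, w) (by simp [edges, hx₀]) (.inl ⟨hu x₀ hx₀, hwl⟩)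

/-- If the center `u` is outside the scope of the star centered at `w`, then the two stars do
not cross. -/
lemma IsMinPartition.nonCrossing_of_notMem {E : U → W → Prop} {s : ℕ} {P : Finset (BStar U W)}
    (hs : 1 ≤ s) (hE : IsStrong E) (hP : IsMinPartition E s P)
    {u : U} {L : Finset W} {w : W} {L' : Finset U}
    (hX : .inl (u, L) ∈ P) (hY : .inr (w, L') ∈ P) (hu : u ∉ hull L') :
    crossNum (.inl (u, L)) (.inr (w, L')) = 0 := by
  rw [crossNum_eq_zero_iff]
  simp only [edges, Finset.mem_image]
  rw [mem_hull] at hu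
  push Not at hu
  rintro _ ⟨a, ha, rfl⟩ _ ⟨b, hb, rfl⟩ (⟨h, h'⟩ | ⟨h, h'⟩)
  · have hall : ∀ x ∈ L', u < x := by
      intro x hx
      by_contra! hxu
      exact absurd (hu x hx b hb hxu) h.not_gt
    exact absurd (hP.leaves_le hs hE _ hX hY hall rfl a ha) h'.not_ge
  · have hall : ∀ x ∈ L', x < u := fun x hx => hu b hb x hx h.le
    have := @IsMinPartition.leaves_le U W (revOrder U) (revOrder W) _ _ E s P hs hE.rev hP.rev _
      u L w L' hX hY hall rfl a ha
    exact absurd this (not_le.2 h' : ¬ w ≤ a)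

lemma IsMinPartition.good_inl_inr {E : U → W → Prop} {s : ℕ} {P : Finset (BStar U W)}
    (hs : 1 ≤ s) (hE : IsStrong E) (hP : IsMinPartition E s P)
    {u : U} {L : Finset W} {w : W} {L' : Finset U}
    (hX : .inl (u, L) ∈ P) (hY : .inr (w, L') ∈ P) :
    crossNum (.inl (u, L)) (.inr (w, L')) = 0 ∨ (u ∈ hull L' ∧ w ∈ hull L) := by
  by_cases hu : u ∈ hull L'
  · by_cases hw : w ∈ hull L
    · exact .inr ⟨hu, hw⟩
    · left
      have := hP.swap.nonCrossing_of_notMem hs hE.swap (mem_map_swap.2 hY) (mem_map_swap.2 hX) hw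
      rw [crossNum_comm, ← crossNum_swap]
      exact this
  · exact .inl (hP.nonCrossing_of_notMem hs hE hX hY hu)

lemma IsMinPartition.good_inl_inl {E : U → W → Prop} {s : ℕ} {P : Finset (BStar U W)}
    (hE : IsStrong E) (hP : IsMinPartition E s P) {u u' : U} {L L' : Finset W}
    (hX : .inl (u, L) ∈ P) (hY : .inl (u', L') ∈ P) :
    crossNum (.inl (u, L) : BStar U W) (.inl (u', L')) = 0 := by
  rw [crossNum_eq_zero_iff]
  simp only [edges, Finset.mem_image]
  rintro _ ⟨a, ha, rfl⟩ _ ⟨b, hb, rfl⟩ (⟨h, h'⟩ | ⟨h, h'⟩)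
  · exact absurd h' (hP.sorted_inl hE hX hY h a ha b hb).not_gt
  · exact absurd h' (hP.sorted_inl hE hY hX h b hb a ha).not_gt

end OppositeSides

end BStar

open BStar in
/-- Any `s`-star partition of a bipartite graph with a strong ordering that has
minimum score (lexicographically) is good: every two distinct stars of it are
non-crossing or interleaving. -/
theorem stmt2 {U W : Type*} [LinearOrder U] [LinearOrder W] [Fintype U] [Fintype W]
    (E : U → W → Prop)
    (hstrong : ∀ u u' w w', E u w → E u' w' → u < u' → w' < w → E u w' ∧ E u' w)
    (s : ℕ) (hs : 1 ≤ s) (P : Finset (BStar U W))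
    (hP : IsPartition E s P)
    (hmin : ∀ Q : Finset (BStar U W), IsPartition E s Q →
      ¬ toLex (score Q) < toLex (score P)) :
    ∀ X ∈ P, ∀ Y ∈ P, X ≠ Y → NonCrossing X Y ∨ Interleaving X Y := by
  have hM : IsMinPartition E s P := ⟨hP, hmin⟩
  have hE : IsStrong E := hstrong
  rintro (⟨c, L⟩ | ⟨c, L⟩) hX (⟨d, M⟩ | ⟨d, M⟩) hY _
  · exact .inl (hM.good_inl_inl hE hX hY)
  · exact hM.good_inl_inr hs hE hX hY
  · rcases hM.good_inl_inr hs hE hY hX with h | h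
    · left
      unfold NonCrossing
      rw [crossNum_comm, h]
    · exact .inr ⟨h.2, h.1⟩
  · left
    unfold NonCrossing
    rw [← crossNum_swap]
    exact hM.swap.good_inl_inl hE.swap (mem_map_swap.2 hX) (mem_map_swap.2 hY)
end

section
/- Let G be a graph, let e = {v, w} be an edge of G, and let G' be the graph obtained from G by removing the edge e and connecting v and w by a path through three new vertices (i.e., adding new vertices a, b, c and edges {v,a}, {a,b}, {b,c}, {c,w}). Then G has a P₃-partition if and only if G' has a P₃-partition. -/
/-!
A part of a `P₃`-partition of the subdivided graph `G'` that contains the middle new vertex `b` is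
`{a, b, c}`, `{v, a, b}` or `{b, c, w}`. In the first case the other parts form a `P₃`-partition of
`G - vw`. In the second case the part of `c` is the path `c - w - x` for some neighbour `x` of `w`,
and these two parts are replaced by the path `v - w - x` of `G`; the third case is symmetric.

Conversely, look at the part of `v` in a `P₃`-partition of `G`. If it does not contain `w`, then no
part uses the edge `vw`, and `{a, b, c}` is added as a new part. If it is `{v, w, x}`, then `x` is
adjacent to `w` or to `v`, and the part is replaced by `{v, a, b}, {c, w, x}` or by
`{x, v, a}, {b, c, w}` respectively.

To make the exchange of parts easy, `P₃`-partitions are handled through the inductive predicate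
`Tiled G S` (`exists_partition_iff`), whose key property `Tiled.extract` says that the part of any
prescribed vertex can be taken as the last one added.
-/

/-- A `P₃`-partition of a graph `G`: a collection of vertex sets covering each
vertex exactly once, each of size three and inducing a subgraph that contains a
path on three vertices. -/
def IsP3Partition {V : Type*} [Fintype V] [DecidableEq V]
    (G : SimpleGraph V) (P : Finset (Finset V)) : Prop :=
  (∀ X ∈ P, X.card = 3 ∧ ∃ a ∈ X, ∃ b ∈ X, ∃ c ∈ X,
    a ≠ b ∧ a ≠ c ∧ b ≠ c ∧ G.Adj a b ∧ G.Adj b c) ∧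
  ∀ v : V, ∃! X, X ∈ P ∧ v ∈ X

/-- The graph obtained from `G` by removing the edge `{v, w}` and connecting
`v` and `w` by a path through three new vertices `a = inr 0`, `b = inr 1`,
`c = inr 2` (edges `{v,a}, {a,b}, {b,c}, {c,w}`). -/
def subdivide3 {V : Type*} (G : SimpleGraph V) (v w : V) :
    SimpleGraph (V ⊕ Fin 3) :=
  SimpleGraph.fromRel fun x y =>
    (∃ a b : V, x = Sum.inl a ∧ y = Sum.inl b ∧ G.Adj a b ∧
      ¬(a = v ∧ b = w) ∧ ¬(a = w ∧ b = v)) ∨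
    (x = Sum.inl v ∧ y = Sum.inr 0) ∨
    (x = Sum.inr 0 ∧ y = Sum.inr 1) ∨
    (x = Sum.inr 1 ∧ y = Sum.inr 2) ∨
    (x = Sum.inr 2 ∧ y = Sum.inl w)

/-! ### Tilings by paths on three vertices -/

/-- `Tiled G S` says that the vertex set `S` splits into finitely many disjoint paths on three
vertices of `G`. -/
inductive Tiled {V : Type*} (G : SimpleGraph V) : Set V → Prop
  | empty : Tiled G ∅
  | step {S : Set V} (a b c : V) (ha : a ∈ S) (hb : b ∈ S) (hc : c ∈ S) (hac : a ≠ c)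
      (hab : G.Adj a b) (hbc : G.Adj b c) (h : Tiled G (S \ {a, b, c})) : Tiled G S

/-- The path that covers a given vertex can be split off; by reversing the path, the vertex is its
first or its middle one. -/
theorem Tiled.extract {V : Type*} {G : SimpleGraph V} {S : Set V} (h : Tiled G S) (x : V)
    (hx : x ∈ S) : ∃ p ∈ S, ∃ q ∈ S, ∃ r ∈ S, p ≠ r ∧ G.Adj p q ∧ G.Adj q r ∧
      (x = p ∨ x = q) ∧ Tiled G (S \ {p, q, r}) := by
  induction h with
  | empty => exact hx.elim
  | @step S a b c ha hb hc hac hab hbc h ih =>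
    by_cases hxa : x = a
    · exact ⟨a, ha, b, hb, c, hc, hac, hab, hbc, Or.inl hxa, h⟩
    by_cases hxb : x = b
    · exact ⟨a, ha, b, hb, c, hc, hac, hab, hbc, Or.inr hxb, h⟩
    by_cases hxc : x = c
    · refine ⟨c, hc, b, hb, a, ha, hac.symm, hbc.symm, hab.symm, Or.inl hxc, ?_⟩
      have e : ({c, b, a} : Set V) = {a, b, c} := by ext; simp; tauto
      rwa [e]
    · obtain ⟨p, hp, q, hq, r, hr, hpr, hpq, hqr, hx', h'⟩ := ih ⟨hx, by simp [hxa, hxb, hxc]⟩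
      refine ⟨p, hp.1, q, hq.1, r, hr.1, hpr, hpq, hqr, hx', ?_⟩
      have hp2 := hp.2
      have hq2 := hq.2
      have hr2 := hr.2
      simp only [Set.mem_insert_iff, Set.mem_singleton_iff, not_or] at hp2 hq2 hr2
      refine Tiled.step a b c ⟨ha, ?_⟩ ⟨hb, ?_⟩ ⟨hc, ?_⟩ hac hab hbc ?_
      · simp only [Set.mem_insert_iff, Set.mem_singleton_iff]; grind
      · simp only [Set.mem_insert_iff, Set.mem_singleton_iff]; grind
      · simp only [Set.mem_insert_iff, Set.mem_singleton_iff]; grind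
      · rwa [sdiff_right_comm]

theorem tiled_of_parts {V : Type*} [DecidableEq V] (G : SimpleGraph V) (P : Finset (Finset V)) :
    (∀ X ∈ P, X.card = 3 ∧ ∃ a ∈ X, ∃ b ∈ X, ∃ c ∈ X,
      a ≠ b ∧ a ≠ c ∧ b ≠ c ∧ G.Adj a b ∧ G.Adj b c) →
    (∀ X ∈ P, ∀ Y ∈ P, ∀ v, v ∈ X → v ∈ Y → X = Y) →
    Tiled G {v | ∃ X ∈ P, v ∈ X} := by
  induction P using Finset.induction_on with
  | empty => intro _ _; simpa using Tiled.empty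
  | @insert X P hX ih =>
    intro h1 h2
    have ih' := ih (fun Y hY => h1 Y (Finset.mem_insert_of_mem hY))
      (fun Y hY Z hZ => h2 Y (Finset.mem_insert_of_mem hY) Z (Finset.mem_insert_of_mem hZ))
    obtain ⟨hcard, a, ha, b, hb, c, hc, hab, hac, hbc, h, h'⟩ := h1 X (Finset.mem_insert_self _ _)
    have hXe : {a, b, c} = X := by
      apply Finset.eq_of_subset_of_card_le
      · intro y hy; simp at hy; grind
      · rw [hcard, Finset.card_eq_three.2 ⟨a, b, c, hab, hac, hbc, rfl⟩]
    refine Tiled.step a b c ⟨X, by simp, ha⟩ ⟨X, by simp, hb⟩ ⟨X, by simp, hc⟩ hac h h' ?_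
    convert ih' using 1
    ext y
    have hy : y ∈ X ↔ y = a ∨ y = b ∨ y = c := by rw [← hXe]; simp
    simp only [Set.mem_sdiff, Set.mem_ofPred_eq, Set.mem_insert_iff, Set.mem_singleton_iff, ← hy]
    constructor
    · rintro ⟨⟨Y, hY, hyY⟩, hn⟩
      rcases Finset.mem_insert.1 hY with rfl | hY
      · exact absurd hyY hn
      · exact ⟨Y, hY, hyY⟩
    · rintro ⟨Y, hY, hyY⟩
      refine ⟨⟨Y, Finset.mem_insert_of_mem hY, hyY⟩, fun hyX => hX ?_⟩
      rwa [h2 X (by simp) Y (by simp [hY]) y hyX hyY]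

theorem Tiled.exists_parts {V : Type*} [DecidableEq V] {G : SimpleGraph V} {S : Set V}
    (h : Tiled G S) : ∃ P : Finset (Finset V),
    (∀ X ∈ P, X.card = 3 ∧ ∃ a ∈ X, ∃ b ∈ X, ∃ c ∈ X,
      a ≠ b ∧ a ≠ c ∧ b ≠ c ∧ G.Adj a b ∧ G.Adj b c) ∧
    (∀ X ∈ P, ∀ v ∈ X, v ∈ S) ∧ ∀ v ∈ S, ∃! X, X ∈ P ∧ v ∈ X := by
  induction h with
  | empty => exact ⟨∅, by simp⟩
  | @step S a b c ha hb hc hac hab hbc h ih =>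
    obtain ⟨P, h1, h2, h3⟩ := ih
    refine ⟨insert {a, b, c} P, ?_, ?_, ?_⟩
    · intro X hX
      rcases Finset.mem_insert.1 hX with rfl | hX
      · exact ⟨Finset.card_eq_three.2 ⟨a, b, c, hab.ne, hac, hbc.ne, rfl⟩, a, by simp, b, by simp,
          c, by simp, hab.ne, hac, hbc.ne, hab, hbc⟩
      · exact h1 X hX
    · intro X hX y hy
      rcases Finset.mem_insert.1 hX with rfl | hX
      · simp at hy; grind
      · exact (h2 X hX y hy).1
    · intro y hy
      by_cases hy' : y ∈ ({a, b, c} : Set V)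
      · refine ⟨{a, b, c}, ⟨by simp, by simpa using hy'⟩, ?_⟩
        rintro Y ⟨hY, hyY⟩
        rcases Finset.mem_insert.1 hY with rfl | hY
        · rfl
        · exact absurd hy' (h2 Y hY y hyY).2
      · obtain ⟨X, ⟨hX, hyX⟩, hu⟩ := h3 y ⟨hy, hy'⟩
        refine ⟨X, ⟨Finset.mem_insert_of_mem hX, hyX⟩, ?_⟩
        rintro Y ⟨hY, hyY⟩
        rcases Finset.mem_insert.1 hY with rfl | hY
        · exact absurd (by simpa using hyY) hy'
        · exact hu Y ⟨hY, hyY⟩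

theorem exists_partition_iff {V : Type*} [Fintype V] [DecidableEq V] (G : SimpleGraph V) :
    (∃ P, IsP3Partition G P) ↔ Tiled G Set.univ := by
  constructor
  · rintro ⟨P, h1, h2⟩
    convert tiled_of_parts G P h1
      (fun X hX Y hY y hyX hyY => (h2 y).unique ⟨hX, hyX⟩ ⟨hY, hyY⟩) using 1
    ext y
    obtain ⟨X, hX, -⟩ := h2 y
    simpa using ⟨X, hX⟩
  · intro h
    obtain ⟨P, h1, -, h3⟩ := h.exists_parts
    exact ⟨P, h1, fun y => h3 y trivial⟩

/-! ### Replacing an edge by a path through three new vertices -/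

section Subdivide

variable {V : Type*} {G : SimpleGraph V} {v w : V}

theorem adj_inl_inl {x y : V} : (subdivide3 G v w).Adj (Sum.inl x) (Sum.inl y) ↔
    G.Adj x y ∧ ¬(x = v ∧ y = w) ∧ ¬(x = w ∧ y = v) := by
  have := G.adj_comm x y
  have h : G.Adj x y → x ≠ y := fun h => h.ne
  simp [subdivide3]
  grind

theorem adj_zero_iff {x : V ⊕ Fin 3} : (subdivide3 G v w).Adj (Sum.inr 0) x ↔
    x = Sum.inl v ∨ x = Sum.inr 1 := by
  rcases x with x | x
  · simp [subdivide3]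
  · fin_cases x <;> simp [subdivide3]

theorem adj_one_iff {x : V ⊕ Fin 3} : (subdivide3 G v w).Adj (Sum.inr 1) x ↔
    x = Sum.inr 0 ∨ x = Sum.inr 2 := by
  rcases x with x | x
  · simp [subdivide3]
  · fin_cases x <;> simp [subdivide3]

theorem adj_two_iff {x : V ⊕ Fin 3} : (subdivide3 G v w).Adj (Sum.inr 2) x ↔
    x = Sum.inl w ∨ x = Sum.inr 1 := by
  rcases x with x | x
  · simp [subdivide3]
  · fin_cases x <;> simp [subdivide3]

/-- A tiling of a set that misses `v` does not use the edge `vw`. -/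
theorem Tiled.lift {S : Set V} (h : Tiled G S) (hS : v ∉ S) :
    Tiled (subdivide3 G v w) (Sum.inl '' S) := by
  induction h with
  | empty => simpa using Tiled.empty
  | @step S a b c ha hb hc hac hab hbc h ih =>
    have ih' := ih (fun h => hS h.1)
    refine Tiled.step (Sum.inl a) (Sum.inl b) (Sum.inl c) ⟨a, ha, rfl⟩ ⟨b, hb, rfl⟩ ⟨c, hc, rfl⟩
      (by simpa using hac) (adj_inl_inl.2 ⟨hab, by grind⟩) (adj_inl_inl.2 ⟨hbc, by grind⟩) ?_
    rw [Set.image_sdiff Sum.inl_injective] at ih'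
    simpa [Set.image_insert_eq] using ih'

/-- A tiling of old vertices in the subdivided graph is a tiling in `G`. -/
theorem Tiled.descend {S : Set (V ⊕ Fin 3)} (h : Tiled (subdivide3 G v w) S)
    (hS : ∀ i, Sum.inr i ∉ S) : Tiled G (Sum.inl ⁻¹' S) := by
  induction h with
  | empty => simpa using Tiled.empty
  | @step S a b c ha hb hc hac hab hbc h ih =>
    have ih' := ih (fun i h => hS i h.1)
    rcases a with a | a
    swap
    · exact absurd ha (hS _)
    rcases b with b | b
    swap
    · exact absurd hb (hS _)
    rcases c with c | c
    swap
    · exact absurd hc (hS _)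
    refine Tiled.step a b c ha hb hc (by simpa using hac) (adj_inl_inl.1 hab).1
      (adj_inl_inl.1 hbc).1 ?_
    convert ih' using 1
    ext y
    simp

/-- The part `{v, w, x}` with `x` adjacent to `w` becomes `{v, a, b}` and `{c, w, x}`. -/
theorem subdivide_of_right {x : V} (hvw : v ≠ w) (hx : G.Adj w x) (hxv : x ≠ v)
    (h : Tiled G (Set.univ \ {v, w, x})) : Tiled (subdivide3 G v w) Set.univ := by
  refine Tiled.step (Sum.inl v) (Sum.inr 0) (Sum.inr 1) trivial trivial trivial (by simp)
    (adj_zero_iff.2 (by simp)).symm (adj_zero_iff.2 (by simp)) ?_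
  refine Tiled.step (Sum.inr 2) (Sum.inl w) (Sum.inl x) (by simp) (by simp [hvw.symm])
    (by simp [hxv]) (by simp) (adj_two_iff.2 (by simp)) (adj_inl_inl.2 ⟨hx, by grind⟩) ?_
  convert Tiled.lift (v := v) (w := w) h (by simp) using 1
  ext y
  rcases y with y | y
  · simp
  · fin_cases y <;> simp

/-- The part `{v, w, x}` with `x` adjacent to `v` becomes `{x, v, a}` and `{b, c, w}`. -/
theorem subdivide_of_left {x : V} (hvw : v ≠ w) (hx : G.Adj v x) (hxw : x ≠ w)
    (h : Tiled G (Set.univ \ {v, w, x})) : Tiled (subdivide3 G v w) Set.univ := by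
  refine Tiled.step (Sum.inl x) (Sum.inl v) (Sum.inr 0) trivial trivial trivial (by simp)
    (adj_inl_inl.2 ⟨hx.symm, by grind⟩) (adj_zero_iff.2 (by simp)).symm ?_
  refine Tiled.step (Sum.inr 1) (Sum.inr 2) (Sum.inl w) (by simp) (by simp)
    (by simp [hvw.symm, hxw.symm]) (by simp) (adj_one_iff.2 (by simp)) (adj_two_iff.2 (by simp)) ?_
  convert Tiled.lift (v := v) (w := w) h (by simp) using 1
  ext y
  rcases y with y | y
  · simp; tauto
  · fin_cases y <;> simp

/-- If the part of `v` does not contain `w`, then `{a, b, c}` is added as a new part. -/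
theorem subdivide_of_avoid {p q r : V} (hpr : p ≠ r) (hpq : G.Adj p q) (hqr : G.Adj q r)
    (hv : v = p ∨ v = q) (hp : p ≠ w) (hq : q ≠ w) (hr : r ≠ w)
    (h : Tiled G (Set.univ \ {p, q, r})) : Tiled (subdivide3 G v w) Set.univ := by
  refine Tiled.step (Sum.inr 0) (Sum.inr 1) (Sum.inr 2) trivial trivial trivial (by simp)
    (adj_zero_iff.2 (by simp)) (adj_one_iff.2 (by simp)) ?_
  refine Tiled.step (Sum.inl p) (Sum.inl q) (Sum.inl r) (by simp) (by simp) (by simp)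
    (by simpa using hpr) (adj_inl_inl.2 ⟨hpq, by grind⟩) (adj_inl_inl.2 ⟨hqr, by grind⟩) ?_
  convert Tiled.lift (v := v) (w := w) h (by simp; tauto) using 1
  ext y
  rcases y with y | y
  · simp
  · fin_cases y <;> simp

theorem tiled_subdivide (hvw : G.Adj v w) (h : Tiled G Set.univ) :
    Tiled (subdivide3 G v w) Set.univ := by
  obtain ⟨p, -, q, -, r, -, hpr, hpq, hqr, hv, h⟩ := h.extract v trivial
  by_cases hr : r = w
  · subst hr
    rcases hv with rfl | rfl
    · refine subdivide_of_left hvw.ne hpq hqr.ne ?_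
      convert h using 2
      ext; simp; tauto
    · refine subdivide_of_left hvw.ne hpq.symm hpr ?_
      convert h using 2
      ext; simp; tauto
  by_cases hq : q = w
  · subst hq
    obtain rfl : v = p := hv.resolve_right hvw.ne
    exact subdivide_of_right hvw.ne hqr hpr.symm h
  by_cases hp : p = w
  · subst hp
    obtain rfl : v = q := hv.resolve_left hvw.ne
    refine subdivide_of_left hvw.ne hqr hpr.symm ?_
    convert h using 2
    ext; simp; tauto
  exact subdivide_of_avoid hpr hpq hqr hv hp hq hr h

/-- If `{v, a, b}` is a part, then `c` lies in a part `{c, w, x}`, and the two merge to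
`{v, w, x}`. -/
theorem tiled_of_left_part (hvw : G.Adj v w)
    (h : Tiled (subdivide3 G v w) (Set.univ \ {Sum.inr 1, Sum.inr 0, Sum.inl v})) :
    Tiled G Set.univ := by
  obtain ⟨p, hp, q, hq, r, hr, hpr, hpq, hqr, hc, h⟩ := h.extract (Sum.inr 2) (by simp)
  simp only [Set.mem_sdiff, Set.mem_univ, true_and, Set.mem_insert_iff, Set.mem_singleton_iff,
    not_or] at hp hq hr
  rcases hc with rfl | rfl
  · obtain rfl : q = Sum.inl w := (adj_two_iff.1 hpq).resolve_right hq.1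
    rcases r with x | i
    · have hwx := (adj_inl_inl.1 hqr).1
      refine Tiled.step v w x trivial trivial trivial (by simpa using Ne.symm hr.2.2) hvw hwx ?_
      convert h.descend (by intro i; fin_cases i <;> simp) using 1
      ext y
      simp
    · fin_cases i <;> simp_all
  · have h1 := (adj_two_iff.1 hpq.symm).resolve_right hp.1
    have h2 := (adj_two_iff.1 hqr).resolve_right hr.1
    exact absurd (h1.trans h2.symm) hpr

/-- If `{b, c, w}` is a part, then `a` lies in a part `{a, v, x}`, and the two merge to
`{v, w, x}`. -/
theorem tiled_of_right_part (hvw : G.Adj v w)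
    (h : Tiled (subdivide3 G v w) (Set.univ \ {Sum.inr 1, Sum.inr 2, Sum.inl w})) :
    Tiled G Set.univ := by
  obtain ⟨p, hp, q, hq, r, hr, hpr, hpq, hqr, hc, h⟩ := h.extract (Sum.inr 0) (by simp)
  simp only [Set.mem_sdiff, Set.mem_univ, true_and, Set.mem_insert_iff, Set.mem_singleton_iff,
    not_or] at hp hq hr
  rcases hc with rfl | rfl
  · obtain rfl : q = Sum.inl v := (adj_zero_iff.1 hpq).resolve_right hq.1
    rcases r with x | i
    · have hvx := (adj_inl_inl.1 hqr).1
      refine Tiled.step w v x trivial trivial trivial (by simpa using Ne.symm hr.2.2)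
        hvw.symm hvx ?_
      convert h.descend (by intro i; fin_cases i <;> simp) using 1
      ext y
      simp
    · fin_cases i <;> simp_all
  · have h1 := (adj_zero_iff.1 hpq.symm).resolve_right hp.1
    have h2 := (adj_zero_iff.1 hqr).resolve_right hr.1
    exact absurd (h1.trans h2.symm) hpr

theorem tiled_of_subdivide (hvw : G.Adj v w) (h : Tiled (subdivide3 G v w) Set.univ) :
    Tiled G Set.univ := by
  obtain ⟨p, -, q, -, r, -, hpr, hpq, hqr, hb, h⟩ := h.extract (Sum.inr 1) trivial
  rcases hb with rfl | rfl
  · rcases adj_one_iff.1 hpq with rfl | rfl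
    · obtain rfl := (adj_zero_iff.1 hqr).resolve_right hpr.symm
      exact tiled_of_left_part hvw h
    · obtain rfl := (adj_two_iff.1 hqr).resolve_right hpr.symm
      exact tiled_of_right_part hvw h
  · have h1 := adj_one_iff.1 hpq.symm
    have h2 := adj_one_iff.1 hqr
    convert h.descend (by intro i; fin_cases i <;> simp <;> grind) using 1
    ext y
    rcases h1 with rfl | rfl <;> rcases h2 with rfl | rfl <;> simp

end Subdivide

/-- Replacing an edge of `G` by a path through three new vertices preserves the
existence of a `P₃`-partition. -/
theorem stmt4 {V : Type*} [Fintype V] [DecidableEq V] (G : SimpleGraph V)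
    (v w : V) (hvw : G.Adj v w) :
    (∃ P, IsP3Partition G P) ↔ ∃ P, IsP3Partition (subdivide3 G v w) P := by
  rw [exists_partition_iff, exists_partition_iff]
  exact ⟨tiled_subdivide hvw, tiled_of_subdivide hvw⟩
end

section
/- Let G be a graph, let e = {v, w} be an edge of G, let i ≥ 0 be an integer, and let G' be the graph obtained from G by removing the edge e and connecting v and w by a path through 3i new inner vertices. Then G has a P₃-partition if and only if G' has a P₃-partition. -/
/-- The graph obtained from `G` by removing the edge `{v, w}` and connecting
`v` and `w` by a path through `k` new inner vertices (for `k = 0` this is `G`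
itself, the path being the edge `{v, w}`). -/
def subdivideEdge {V : Type*} (G : SimpleGraph V) (v w : V) (k : ℕ) :
    SimpleGraph (V ⊕ Fin k) :=
  SimpleGraph.fromRel fun x y =>
    (∃ a b : V, x = Sum.inl a ∧ y = Sum.inl b ∧ G.Adj a b ∧
      ¬(a = v ∧ b = w) ∧ ¬(a = w ∧ b = v)) ∨
    (k = 0 ∧ x = Sum.inl v ∧ y = Sum.inl w) ∨
    (∃ j : Fin k, x = Sum.inl v ∧ y = Sum.inr j ∧ (j : ℕ) = 0) ∨
    (∃ j j' : Fin k, x = Sum.inr j ∧ y = Sum.inr j' ∧ (j' : ℕ) = (j : ℕ) + 1) ∨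
    (∃ j : Fin k, x = Sum.inr j ∧ y = Sum.inl w ∧ (j : ℕ) + 1 = k)

/-! ### Tilings by three-vertex paths -/

/-- `Tileable G S`: the finite vertex set `S` is a disjoint union of vertex sets of
(not necessarily induced) three-vertex paths of `G`. -/
inductive Tileable {V : Type*} (G : SimpleGraph V) : Finset V → Prop
  | empty : Tileable G ∅
  | cons {a b c : V} {T S : Finset V} (hac : a ≠ c) (hab : G.Adj a b) (hbc : G.Adj b c)
      (ha : a ∉ T) (hb : b ∉ T) (hc : c ∉ T) (hT : Tileable G T)
      (hS : ∀ x, x ∈ S ↔ x = a ∨ x = b ∨ x = c ∨ x ∈ T) : Tileable G S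

namespace Tileable

variable {V W : Type*} {G : SimpleGraph V} {H : SimpleGraph W}

/-- Every vertex of a tileable set lies on a tile whose removal leaves a tileable set. -/
lemma exists_tile [DecidableEq V] {S : Finset V} (h : Tileable G S) {x : V} (hx : x ∈ S) :
    ∃ (a b c : V) (T : Finset V), (x = a ∨ x = b ∨ x = c) ∧ a ≠ c ∧ G.Adj a b ∧ G.Adj b c ∧
      a ∉ T ∧ b ∉ T ∧ c ∉ T ∧ Tileable G T ∧
      ∀ y, y ∈ S ↔ y = a ∨ y = b ∨ y = c ∨ y ∈ T := by
  induction h with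
  | empty => simp at hx
  | @cons a b c T S hac hab hbc ha hb hc hT hS ih =>
    by_cases hxt : x = a ∨ x = b ∨ x = c
    · exact ⟨a, b, c, T, hxt, hac, hab, hbc, ha, hb, hc, hT, hS⟩
    · have hxT : x ∈ T := by grind
      obtain ⟨a', b', c', T', h1, h2, h3, h4, h5, h6, h7, h8, h9⟩ := ih hxT
      refine ⟨a', b', c', insert a (insert b (insert c T')), h1, h2, h3, h4, ?_, ?_, ?_, ?_, ?_⟩
      · grind
      · grind
      · grind
      · exact cons hac hab hbc (by grind) (by grind) (by grind) h8 (by grind)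
      · grind

lemma mono {H : SimpleGraph V} {S : Finset V} (h : Tileable G S)
    (hGH : ∀ a ∈ S, ∀ b ∈ S, G.Adj a b → H.Adj a b) : Tileable H S := by
  induction h with
  | empty => exact empty
  | @cons a b c T S hac hab hbc ha hb hc hT hS ih =>
    exact cons hac (hGH _ (by grind) _ (by grind) hab) (hGH _ (by grind) _ (by grind) hbc)
      ha hb hc (ih fun x hx y hy => hGH x (by grind) y (by grind)) hS

lemma map_iff (f : V ↪ W) (hf : ∀ a b, G.Adj a b ↔ H.Adj (f a) (f b)) (S : Finset V) :
    Tileable G S ↔ Tileable H (S.map f) := by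
  constructor
  · intro h
    induction h with
    | empty => exact empty
    | @cons a b c T S hac hab hbc ha hb hc hT hS ih =>
      refine cons (a := f a) (b := f b) (c := f c) (by simpa using hac) ((hf _ _).1 hab)
        ((hf _ _).1 hbc) (by simpa using ha) (by simpa using hb) (by simpa using hc) ih ?_
      intro x
      simp only [Finset.mem_map]
      grind
  · intro h
    generalize hS' : S.map f = S' at h
    induction h generalizing S with
    | empty =>
      rw [Finset.map_eq_empty.1 hS']
      exact empty
    | @cons a b c T S' hac hab hbc ha hb hc hT hS ih =>
      classical
      subst hS'
      have hr : ∀ x, (x = a ∨ x = b ∨ x = c ∨ x ∈ T) → ∃ y ∈ S, f y = x := by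
        intro x hx
        simpa using (hS x).2 hx
      obtain ⟨a, haS, rfl⟩ := hr a (by simp)
      obtain ⟨b, hbS, rfl⟩ := hr b (by simp)
      obtain ⟨c, hcS, rfl⟩ := hr c (by simp)
      have hT' : (S.filter fun y => f y ∈ T).map f = T := by
        ext x
        simp only [Finset.mem_map, Finset.mem_filter]
        grind
      refine cons (a := a) (b := b) (c := c) (T := S.filter fun y => f y ∈ T) (by grind)
        ((hf _ _).2 hab) ((hf _ _).2 hbc) (by grind) (by grind) (by grind) (ih _ hT') ?_
      intro x
      have := hS (f x)
      simp only [Finset.mem_map', f.injective.eq_iff] at this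
      grind

end Tileable

lemma exists_isP3Partition_iff {V : Type*} [Fintype V] [DecidableEq V] (G : SimpleGraph V) :
    (∃ P, IsP3Partition G P) ↔ Tileable G Finset.univ := by
  constructor
  · rintro ⟨P, hP, hu⟩
    have key : ∀ Q : Finset (Finset V), Q ⊆ P → Tileable G (Q.biUnion id) := by
      intro Q
      induction Q using Finset.induction_on with
      | empty => intro _; exact Tileable.empty
      | insert X Q hX ih =>
        intro hQ
        have hXP : X ∈ P := hQ (by simp)
        obtain ⟨h3, a, ha, b, hb, c, hc, hab, hac, hbc, hG, hG'⟩ := hP X hXP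
        have hXe : {a, b, c} = X :=
          Finset.eq_of_subset_of_card_le (by grind)
            (by rw [h3, Finset.card_eq_three.2 ⟨a, b, c, hab, hac, hbc, rfl⟩])
        have hd : ∀ x ∈ X, x ∉ Q.biUnion id := by
          intro x hx hxQ
          obtain ⟨Y, hY, hxY⟩ := Finset.mem_biUnion.1 hxQ
          have := (hu x).unique ⟨hXP, hx⟩ ⟨hQ (Finset.mem_insert_of_mem hY), hxY⟩
          exact hX (this ▸ hY)
        refine Tileable.cons hac hG hG' (hd a ha) (hd b hb) (hd c hc)
          (ih fun Y hY => hQ (Finset.mem_insert_of_mem hY)) ?_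
        intro x
        rw [Finset.biUnion_insert, Finset.mem_union, ← hXe]
        simp [or_assoc]
    have := key P subset_rfl
    convert this
    symm
    rw [Finset.eq_univ_iff_forall]
    intro x
    obtain ⟨X, ⟨hX, hx⟩, -⟩ := hu x
    exact Finset.mem_biUnion.2 ⟨X, hX, hx⟩
  · have key : ∀ S, Tileable G S → ∃ P : Finset (Finset V),
        (∀ X ∈ P, X.card = 3 ∧ ∃ a ∈ X, ∃ b ∈ X, ∃ c ∈ X,
          a ≠ b ∧ a ≠ c ∧ b ≠ c ∧ G.Adj a b ∧ G.Adj b c) ∧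
        (∀ X ∈ P, X ⊆ S) ∧ ∀ v ∈ S, ∃! X, X ∈ P ∧ v ∈ X := by
      intro S h
      induction h with
      | empty => exact ⟨∅, by simp⟩
      | @cons a b c T S hac hab hbc ha hb hc hT hS ih =>
        obtain ⟨P, h1, h2, h3⟩ := ih
        refine ⟨insert {a, b, c} P, ?_, ?_, ?_⟩
        · intro X hX
          rcases Finset.mem_insert.1 hX with rfl | hX
          · exact ⟨Finset.card_eq_three.2 ⟨a, b, c, hab.ne, hac, hbc.ne, rfl⟩,
              a, by simp, b, by simp, c, by simp, hab.ne, hac, hbc.ne, hab, hbc⟩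
          · exact h1 X hX
        · intro X hX
          rcases Finset.mem_insert.1 hX with rfl | hX
          · grind
          · have := h2 X hX
            grind
        · intro x hx
          by_cases hxT : x ∈ T
          · obtain ⟨X, ⟨hX, hxX⟩, hXu⟩ := h3 x hxT
            refine ⟨X, ⟨by simp [hX], hxX⟩, ?_⟩
            rintro Y ⟨hY, hxY⟩
            rcases Finset.mem_insert.1 hY with rfl | hY
            · grind
            · exact hXu Y ⟨hY, hxY⟩
          · refine ⟨{a, b, c}, ⟨by simp, by grind⟩, ?_⟩
            rintro Y ⟨hY, hxY⟩
            rcases Finset.mem_insert.1 hY with rfl | hY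
            · rfl
            · exact absurd (h2 Y hY hxY) hxT
    intro h
    obtain ⟨P, h1, -, h3⟩ := key _ h
    exact ⟨P, h1, fun v => h3 v (Finset.mem_univ v)⟩

/-! ### Subdividing one edge three times -/

/-- Replacing the edge `{u, w}` of `H` by the path `u, x, y, z, w` preserves tileability.
Only the adjacencies within the vertex sets under consideration are prescribed. -/
lemma tileable_step {W : Type*} [DecidableEq W] {H H' : SimpleGraph W} {S S' : Finset W}
    {u w x y z : W} (hu : u ∈ S) (hw : w ∈ S) (huw : H.Adj u w)
    (hx : x ∉ S) (hy : y ∉ S) (hz : z ∉ S) (hxy : x ≠ y) (hxz : x ≠ z) (hyz : y ≠ z)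
    (hS' : ∀ a, a ∈ S' ↔ a = x ∨ a = y ∨ a = z ∨ a ∈ S)
    (hold : ∀ a ∈ S, ∀ b ∈ S,
      H'.Adj a b ↔ H.Adj a b ∧ ¬(a = u ∧ b = w) ∧ ¬(a = w ∧ b = u))
    (hX : ∀ a ∈ S', H'.Adj x a ↔ a = u ∨ a = y)
    (hY : ∀ a ∈ S', H'.Adj y a ↔ a = x ∨ a = z)
    (hZ : ∀ a ∈ S', H'.Adj z a ↔ a = y ∨ a = w) :
    Tileable H S ↔ Tileable H' S' := by
  have hne := huw.ne
  have xu : H'.Adj x u := (hX u (by grind)).2 (by simp)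
  have xy : H'.Adj x y := (hX y (by grind)).2 (by simp)
  have yz : H'.Adj y z := (hY z (by grind)).2 (by simp)
  have zw : H'.Adj z w := (hZ w (by grind)).2 (by simp)
  constructor
  · intro h
    obtain ⟨a, b, c, T, hua, hac, hab, hbc, ha, hb, hc, hT, hS⟩ := h.exists_tile hu
    have hT' : Tileable H' T := hT.mono fun p hp q hq hpq =>
      (hold p (by grind) q (by grind)).2 ⟨hpq, by grind, by grind⟩
    -- the two ways of rerouting a tile that uses the edge `{u, w}`; `t` is its third vertex
    have left : ∀ t ∈ S, t ∉ T → t ≠ u → t ≠ w → H.Adj t u →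
        (∀ p, p ∈ S ↔ p = t ∨ p = u ∨ p = w ∨ p ∈ T) → w ∉ T → u ∉ T → Tileable H' S' := by
      intro t ht htT htu htw hadj hSt hwT huT
      have h1 : Tileable H' (insert y (insert z (insert w T))) :=
        Tileable.cons (a := y) (b := z) (c := w) (by grind) yz zw (by grind) (by grind)
          (by grind) hT' (by grind)
      exact Tileable.cons (a := t) (b := u) (c := x) (by grind)
        ((hold t ht u hu).2 ⟨hadj, by grind, by grind⟩) xu.symm (by grind) (by grind)
        (by grind) h1 (by grind)
    have right : ∀ t ∈ S, t ∉ T → t ≠ u → t ≠ w → H.Adj w t →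
        (∀ p, p ∈ S ↔ p = t ∨ p = u ∨ p = w ∨ p ∈ T) → w ∉ T → u ∉ T → Tileable H' S' := by
      intro t ht htT htu htw hadj hSt hwT huT
      have h1 : Tileable H' (insert z (insert w (insert t T))) :=
        Tileable.cons (a := z) (b := w) (c := t) (by grind) zw
          ((hold w hw t ht).2 ⟨hadj, by grind, by grind⟩) (by grind) (by grind)
          (by grind) hT' (by grind)
      exact Tileable.cons (a := u) (b := x) (c := y) (by grind) xu.symm xy (by grind) (by grind)
        (by grind) h1 (by grind)
    have haS : a ∈ S := by grind
    have hbS : b ∈ S := by grind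
    have hcS : c ∈ S := by grind
    by_cases e1 : a = u ∧ b = w
    · obtain ⟨rfl, rfl⟩ := e1
      exact right c hcS hc (by grind) hbc.ne' hbc (by grind) hb ha
    by_cases e2 : a = w ∧ b = u
    · obtain ⟨rfl, rfl⟩ := e2
      exact left c hcS hc hbc.ne' (by grind) hbc.symm (by grind) ha hb
    by_cases e3 : b = u ∧ c = w
    · obtain ⟨rfl, rfl⟩ := e3
      exact left a haS ha hab.ne hac hab (by grind) hc hb
    by_cases e4 : b = w ∧ c = u
    · obtain ⟨rfl, rfl⟩ := e4
      exact right a haS ha hac hab.ne hab.symm (by grind) hb hc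
    have h1 : Tileable H' S :=
      Tileable.cons hac ((hold a haS b hbS).2 ⟨hab, e1, e2⟩)
        ((hold b hbS c hcS).2 ⟨hbc, e3, e4⟩) ha hb hc hT' hS
    exact Tileable.cons hxz xy yz hx hy hz h1 hS'
  · intro h
    obtain ⟨a, b, c, T, hya, hac, hab, hbc, ha, hb, hc, hT, hS⟩ :=
      h.exists_tile (x := y) (by grind)
    have haS : a ∈ S' := by grind
    have hbS : b ∈ S' := by grind
    have hcS : c ∈ S' := by grind
    have hba := hab.symm
    have hcb := hbc.symm
    -- the tile through `y` is `x y z`, `u x y` or `y z w`, and `T` is the set of the other vertices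
    have cases3 : (∀ p, p ∈ T ↔ p ∈ S) ∨
        (∀ p, p ∈ T ↔ p = z ∨ (p ∈ S ∧ p ≠ u)) ∨ (∀ p, p ∈ T ↔ p = x ∨ (p ∈ S ∧ p ≠ w)) := by
      rcases hya with rfl | rfl | rfl
      · rcases (hY b hbS).1 hab with rfl | rfl
        · obtain rfl : c = u := by grind
          refine Or.inr (Or.inl fun p => ?_)
          clear hold hX hY hZ
          grind
        · obtain rfl : c = w := by grind
          refine Or.inr (Or.inr fun p => ?_)
          clear hold hX hY hZ
          grind
      · rcases (hY a haS).1 hba with rfl | rfl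
        · obtain rfl : c = z := by grind
          refine Or.inl fun p => ?_
          clear hold hX hY hZ
          grind
        · obtain rfl : c = x := by grind
          refine Or.inl fun p => ?_
          clear hold hX hY hZ
          grind
      · rcases (hY b hbS).1 hcb with rfl | rfl
        · obtain rfl : a = u := by grind
          refine Or.inr (Or.inl fun p => ?_)
          clear hold hX hY hZ
          grind
        · obtain rfl : a = w := by grind
          refine Or.inr (Or.inr fun p => ?_)
          clear hold hX hY hZ
          grind
    rcases cases3 with hTS | hTS | hTS
    · obtain rfl : T = S := Finset.ext hTS
      exact hT.mono fun p hp q hq hpq => ((hold p hp q hq).1 hpq).1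
    · obtain ⟨d, e, f, R, hze, hdf, hde, hef, hd, he, hf, hR, hTR⟩ :=
        hT.exists_tile (x := z) (by grind)
      have hed := hde.symm
      have hfe := hef.symm
      have hR' : Tileable H R := hR.mono fun p hp q hq hpq =>
        ((hold p (by grind) q (by grind)).1 hpq).1
      obtain ⟨t, ht, htw, htR, hadj, hSR⟩ : ∃ t, t ∈ S ∧ t ≠ u ∧ t ∉ R ∧ H'.Adj w t ∧
          (∀ p, p ∈ S ↔ p = u ∨ p = w ∨ p = t ∨ p ∈ R) := by
        have hdS : d ∈ S' := by grind
        have heS : e ∈ S' := by grind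
        have hfS : f ∈ S' := by grind
        rcases hze with rfl | rfl | rfl
        · obtain rfl : e = w := by grind
          exact ⟨f, by grind⟩
        · grind
        · obtain rfl : e = w := by grind
          exact ⟨d, by grind⟩
      exact Tileable.cons (a := u) (b := w) (c := t) (by grind) huw
        ((hold w hw t ht).1 hadj).1 (by grind) (by grind) htR hR' hSR
    · obtain ⟨d, e, f, R, hxe, hdf, hde, hef, hd, he, hf, hR, hTR⟩ :=
        hT.exists_tile (x := x) (by grind)
      have hed := hde.symm
      have hfe := hef.symm
      have hR' : Tileable H R := hR.mono fun p hp q hq hpq =>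
        ((hold p (by grind) q (by grind)).1 hpq).1
      obtain ⟨t, ht, htw, htR, hadj, hSR⟩ : ∃ t, t ∈ S ∧ t ≠ w ∧ t ∉ R ∧ H'.Adj u t ∧
          (∀ p, p ∈ S ↔ p = w ∨ p = u ∨ p = t ∨ p ∈ R) := by
        have hdS : d ∈ S' := by grind
        have heS : e ∈ S' := by grind
        have hfS : f ∈ S' := by grind
        rcases hxe with rfl | rfl | rfl
        · obtain rfl : e = u := by grind
          exact ⟨f, by grind⟩
        · grind
        · obtain rfl : e = u := by grind
          exact ⟨d, by grind⟩
      exact Tileable.cons (a := w) (b := u) (c := t) (by grind) huw.symm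
        ((hold u hu t ht).1 hadj).1 (by grind) (by grind) htR hR' hSR

/-! ### The subdivided graphs on a common vertex type -/

/-- The subdivision of the edge `{v, w}` by `k` inner vertices, drawn on `V ⊕ ℕ`: the inner
vertices are `Sum.inr j` with `j < k`, and every `Sum.inr j` with `k ≤ j` is isolated. -/
def subdivideNat {V : Type*} (G : SimpleGraph V) (v w : V) (k : ℕ) : SimpleGraph (V ⊕ ℕ) :=
  SimpleGraph.fromRel fun x y =>
    (∃ a b : V, x = Sum.inl a ∧ y = Sum.inl b ∧ G.Adj a b ∧
      ¬(a = v ∧ b = w) ∧ ¬(a = w ∧ b = v)) ∨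
    (k = 0 ∧ x = Sum.inl v ∧ y = Sum.inl w) ∨
    (0 < k ∧ x = Sum.inl v ∧ y = Sum.inr 0) ∨
    (∃ j : ℕ, j + 1 < k ∧ x = Sum.inr j ∧ y = Sum.inr (j + 1)) ∨
    (∃ j : ℕ, x = Sum.inr j ∧ y = Sum.inl w ∧ j + 1 = k)

lemma subdivideNat_zero_adj {V : Type*} (G : SimpleGraph V) {v w : V} (hvw : G.Adj v w)
    (a b : V) : G.Adj a b ↔ (subdivideNat G v w 0).Adj (Sum.inl a) (Sum.inl b) := by
  have := hvw.symm
  have := G.ne_of_adj (a := a) (b := b)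
  have := G.adj_comm a b
  simp [subdivideNat]
  grind

lemma subdivideNat_adj {V : Type*} (G : SimpleGraph V) (v w : V) (k : ℕ) (a b : V ⊕ Fin k) :
    (subdivideEdge G v w k).Adj a b ↔
      (subdivideNat G v w k).Adj (Sum.map id Fin.val a) (Sum.map id Fin.val b) := by
  rcases a with a | ⟨a, ha⟩ <;> rcases b with b | ⟨b, hb⟩ <;>
    simp [subdivideNat, subdivideEdge] <;> grind

/-- The vertex set of the subdivision by `k` inner vertices inside `V ⊕ ℕ`. -/
def subdivideVerts (V : Type*) [Fintype V] (k : ℕ) : Finset (V ⊕ ℕ) :=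
  Finset.univ.disjSum (Finset.range k)

lemma tileable_subdivideNat_succ {V : Type*} [Fintype V] [DecidableEq V] (G : SimpleGraph V)
    {v w : V} (hvw : G.Adj v w) (k : ℕ) :
    Tileable (subdivideNat G v w k) (subdivideVerts V k) ↔
      Tileable (subdivideNat G v w (k + 3)) (subdivideVerts V (k + 3)) := by
  have hne := hvw.ne
  -- the neighbour of `w` on the path: `v` itself if there are no inner vertices yet
  refine tileable_step (u := if k = 0 then Sum.inl v else Sum.inr (k - 1)) (w := Sum.inl w)
    (x := Sum.inr k) (y := Sum.inr (k + 1)) (z := Sum.inr (k + 2)) ?_ ?_ ?_ ?_ ?_ ?_ ?_ ?_ ?_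
    ?_ ?_ ?_ ?_ ?_
  · split_ifs with h <;> simp [subdivideVerts]
    omega
  · simp [subdivideVerts]
  · split_ifs with h <;> simp [subdivideNat, h, hne]
    omega
  · simp [subdivideVerts]
  · simp [subdivideVerts]
  · simp [subdivideVerts]
  · simp
  · simp
  · simp
  · rintro (a | a) <;> simp [subdivideVerts]
    omega
  · rintro (a | a) ha (b | b) hb <;> simp [subdivideVerts] at ha hb <;>
      simp [subdivideNat] <;> grind
  all_goals
    rintro (a | a) ha <;> simp [subdivideVerts] at ha <;> simp [subdivideNat] <;> grind

/-- Replacing an edge of `G` by a path through `3i` new inner vertices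
preserves the existence of a `P₃`-partition. -/
theorem stmt5 {V : Type*} [Fintype V] [DecidableEq V] (G : SimpleGraph V)
    (v w : V) (hvw : G.Adj v w) (i : ℕ) :
    (∃ P, IsP3Partition G P) ↔
      ∃ P, IsP3Partition (subdivideEdge G v w (3 * i)) P := by
  rw [exists_isP3Partition_iff, exists_isP3Partition_iff,
    Tileable.map_iff (H := subdivideNat G v w 0) Function.Embedding.inl
      (subdivideNat_zero_adj G hvw),
    Tileable.map_iff (H := subdivideNat G v w (3 * i))
      (Function.Embedding.sumMap (Function.Embedding.refl V) Fin.valEmbedding)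
      (subdivideNat_adj G v w (3 * i))]
  have h0 : (Finset.univ : Finset V).map Function.Embedding.inl = subdivideVerts V 0 := by
    ext x; rcases x with x | x <;> simp [subdivideVerts]
  have hi : (Finset.univ : Finset (V ⊕ Fin (3 * i))).map
      (Function.Embedding.sumMap (Function.Embedding.refl V) Fin.valEmbedding) =
      subdivideVerts V (3 * i) := by
    ext x
    rcases x with x | x <;> simp [subdivideVerts, Fin.exists_iff]
  rw [h0, hi]
  clear h0 hi
  induction i with
  | zero => rfl
  | succ i ih => exact ih.trans (tileable_subdivideNat_succ G hvw (3 * i))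
end

section
/- Let G = (C ∪ I, E_C ∪ E) be a split graph, where C induces a clique with edge set E_C, I is an independent set, and B = (C ∪ I, E) is the bipartite graph formed by the edges between C and I. Then G admits a P₃-partition if and only if there exists a feasible factor of B. -/
/-!
A part of a `P₃`-partition meets `I` in at most two vertices, and it contains a vertex of `C`
adjacent to all its vertices in `I` (`exists_center`).  Joining each vertex of `I` to the centre of
its part yields the factor: only centres have positive degree, and a centre of degree one shares its
part with exactly one further vertex of `C`, which has degree zero.  This injects the degree-one
vertices of `C` into the degree-zero ones.

Conversely, given a feasible factor, fix an injection `e` from the degree-one vertices of `C` into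
the degree-zero ones.  A degree-two vertex together with its two neighbours, and a degree-one vertex
`c` together with its neighbour and `e c`, form disjoint triples that contain a `P₃`.  They cover
`I`, so the uncovered vertices form a clique, whose order is divisible by three, and it can be cut
into triples arbitrarily (`exists_triples_of_clique`).
-/

open scoped Classical

/-- The degree of a vertex in a graph on a finite vertex type. -/
noncomputable def deg {V : Type*} [Fintype V] (F : SimpleGraph V) (v : V) : ℕ :=
  (Finset.univ.filter fun u => F.Adj v u).card

/-- A feasible factor of the bipartite graph `B = (C ∪ I, E)` of edges between
`C` and `I`: a spanning subgraph of `B` in which every vertex of `I` has degree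
exactly one, every vertex of `C` has degree `0`, `1` or `2`, and there are at
least as many degree-zero vertices of `C` as degree-one vertices of `C`. -/
def FeasibleFactor {V : Type*} [Fintype V] [DecidableEq V] (G : SimpleGraph V)
    (C I : Finset V) (F : SimpleGraph V) : Prop :=
  F ≤ G ∧
  (∀ a b, F.Adj a b → (a ∈ C ∧ b ∈ I) ∨ (a ∈ I ∧ b ∈ C)) ∧
  (∀ v ∈ I, deg F v = 1) ∧
  (∀ v ∈ C, deg F v ≤ 2) ∧
  (C.filter fun v => deg F v = 1).card ≤ (C.filter fun v => deg F v = 0).card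

/-- A triple of vertices that induces a subgraph containing a path on three vertices. -/
def IsP3Triple {V : Type*} (G : SimpleGraph V) (X : Finset V) : Prop :=
  X.card = 3 ∧ ∃ a ∈ X, ∃ b ∈ X, ∃ c ∈ X,
    a ≠ b ∧ a ≠ c ∧ b ≠ c ∧ G.Adj a b ∧ G.Adj b c

theorem isP3Triple_of_center {V : Type*} [DecidableEq V] {G : SimpleGraph V} {X : Finset V} {b : V}
    (hX : X.card = 3) (hb : b ∈ X) (h : ∀ v ∈ X, v ≠ b → G.Adj b v) : IsP3Triple G X := by
  refine ⟨hX, ?_⟩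
  have hc : (X.erase b).card = 2 := by rw [Finset.card_erase_of_mem hb, hX]
  obtain ⟨x, y, hxy, he⟩ := Finset.card_eq_two.1 hc
  have hx : x ∈ X.erase b := by simp [he]
  have hy : y ∈ X.erase b := by simp [he]
  rw [Finset.mem_erase] at hx hy
  exact ⟨x, hx.2, b, hb, y, hy.2, hx.1, hxy, hy.1.symm, (h x hx.2 hx.1).symm, h y hy.2 hy.1⟩

theorem exists_triples_of_clique {V : Type*} [DecidableEq V] (G : SimpleGraph V) (n : ℕ) :
    ∀ R : Finset V, R.card = 3 * n → (∀ a ∈ R, ∀ b ∈ R, a ≠ b → G.Adj a b) →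
      ∃ P : Finset (Finset V), (∀ X ∈ P, IsP3Triple G X ∧ X ⊆ R) ∧
        ∀ v ∈ R, ∃! X, X ∈ P ∧ v ∈ X := by
  induction n with
  | zero =>
    intro R hR _
    have : R = ∅ := by simpa using hR
    subst this
    exact ⟨∅, by simp, by simp⟩
  | succ n ih =>
    intro R hR hcl
    obtain ⟨T, hTR, hT⟩ := Finset.exists_subset_card_eq (s := R) (n := 3) (by omega)
    have hcard : (R \ T).card = 3 * n := by
      rw [Finset.card_sdiff_of_subset hTR]; omega
    obtain ⟨P, hP, hu⟩ := ih (R \ T) hcard (fun a ha b hb =>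
      hcl a (Finset.mem_sdiff.1 ha).1 b (Finset.mem_sdiff.1 hb).1)
    refine ⟨insert T P, ?_, ?_⟩
    · intro X hX
      rcases Finset.mem_insert.1 hX with rfl | hX
      · obtain ⟨b, hb⟩ : X.Nonempty := Finset.card_pos.1 (by omega)
        exact ⟨isP3Triple_of_center hT hb fun v hv hvb => hcl b (hTR hb) v (hTR hv) hvb.symm, hTR⟩
      · exact ⟨(hP X hX).1, (hP X hX).2.trans Finset.sdiff_subset⟩
    · intro v hv
      by_cases hvT : v ∈ T
      · refine ⟨T, ⟨by simp, hvT⟩, ?_⟩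
        rintro Y ⟨hY, hvY⟩
        rcases Finset.mem_insert.1 hY with rfl | hY
        · rfl
        · exact absurd hvT (Finset.mem_sdiff.1 ((hP Y hY).2 hvY)).2
      · obtain ⟨X, ⟨hX, hvX⟩, huX⟩ := hu v (Finset.mem_sdiff.2 ⟨hv, hvT⟩)
        refine ⟨X, ⟨by simp [hX], hvX⟩, ?_⟩
        rintro Y ⟨hY, hvY⟩
        rcases Finset.mem_insert.1 hY with rfl | hY
        · exact absurd hvY hvT
        · exact huX Y ⟨hY, hvY⟩

/-- If the middle vertex of the path lies in `C`, it is the centre; otherwise both ends lie in `C`,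
the middle vertex is the only one in `I`, and either end serves. -/
theorem exists_center {V : Type*} [Fintype V] [DecidableEq V] {G : SimpleGraph V}
    {C I : Finset V} (hdisj : Disjoint C I) (hcover : C ∪ I = Finset.univ)
    (hindep : ∀ a ∈ I, ∀ b ∈ I, ¬ G.Adj a b) {X : Finset V} (hX : IsP3Triple G X) :
    ∃ b ∈ X, b ∈ C ∧ ∀ v ∈ X, v ∈ I → G.Adj v b := by
  obtain ⟨hc, a, ha, b, hb, c, hcX, hab, hac, hbc, h1, h2⟩ := hX
  have hXe : X = {a, b, c} := by
    symm
    apply Finset.eq_of_subset_of_card_le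
    · intro x; simp; rintro (rfl | rfl | rfl) <;> assumption
    · rw [hc, Finset.card_eq_three.2 ⟨a, b, c, hab, hac, hbc, rfl⟩]
  have hCI : ∀ v, v ∈ C ∨ v ∈ I := fun v => by
    rw [← Finset.mem_union, hcover]; exact Finset.mem_univ v
  have hne : ∀ v, v ∈ C → v ∉ I := fun v h h' => Finset.disjoint_left.1 hdisj h h'
  by_cases hbC : b ∈ C
  · refine ⟨b, hb, hbC, ?_⟩
    intro v hv hvI
    rw [hXe] at hv
    simp at hv
    rcases hv with rfl | rfl | rfl
    · exact h1
    · exact absurd hvI (hne _ hbC)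
    · exact h2.symm
  · have hbI := (hCI b).resolve_left hbC
    have haC : a ∈ C := (hCI a).resolve_right fun h => hindep a h b hbI h1
    have hcC : c ∈ C := (hCI c).resolve_right fun h => hindep b hbI c h h2
    refine ⟨a, ha, haC, ?_⟩
    intro v hv hvI
    rw [hXe] at hv
    simp at hv
    rcases hv with rfl | rfl | rfl
    · exact absurd hvI (hne _ haC)
    · exact h1.symm
    · exact absurd hvI (hne _ hcC)

theorem exists_factor_of_partition {V : Type*} [Fintype V] [DecidableEq V] (G : SimpleGraph V)
    (C I : Finset V) (hdisj : Disjoint C I) (hcover : C ∪ I = Finset.univ)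
    (hindep : ∀ a ∈ I, ∀ b ∈ I, ¬ G.Adj a b)
    (P : Finset (Finset V)) (hP : IsP3Partition G P) : ∃ F, FeasibleFactor G C I F := by
  obtain ⟨hgood, huniq⟩ := hP
  have hCI : ∀ v, v ∈ C ∨ v ∈ I := fun v => by
    rw [← Finset.mem_union, hcover]; exact Finset.mem_univ v
  have hne : ∀ v, v ∈ C → v ∉ I := fun v h h' => Finset.disjoint_left.1 hdisj h h'
  choose part hpart hpu using huniq
  have hpe : ∀ v w, v ∈ part w → part w = part v := fun v w h => hpu v _ ⟨(hpart w).1, h⟩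
  choose ctr hctrX hctrC hctrI using fun (X : Finset V) (hX : X ∈ P) =>
    exists_center hdisj hcover hindep (hgood X hX)
  -- `r v` is the centre of the part of `v`.
  let r : V → V := fun v => ctr (part v) (hpart v).1
  have hre : ∀ v w, part w = part v → r w = r v := by
    intro v w h
    simp only [r, h]
  have hrX : ∀ v, r v ∈ part v := fun v => hctrX _ _
  have hrC : ∀ v, r v ∈ C := fun v => hctrC _ _
  have hrI : ∀ v, v ∈ I → G.Adj v (r v) := fun v hv => hctrI _ _ v (hpart v).2 hv
  clear_value r
  let F : SimpleGraph V :=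
    { Adj := fun a b => (a ∈ I ∧ b = r a) ∨ (b ∈ I ∧ a = r b)
      symm := ⟨fun a b h => h.symm⟩
      loopless := ⟨fun a h => by
        have h' : a ∈ I ∧ a = r a := by simpa using h
        exact hne a (h'.2 ▸ hrC a) h'.1⟩ }
  have hAdj : ∀ a b, F.Adj a b ↔ (a ∈ I ∧ b = r a) ∨ (b ∈ I ∧ a = r b) := fun a b => Iff.rfl
  clear_value F
  have hdegI : ∀ v ∈ I, deg F v = 1 := by
    intro v hv
    rw [deg, Finset.card_eq_one]
    refine ⟨r v, ?_⟩
    ext u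
    simp only [Finset.mem_filter, Finset.mem_univ, true_and, Finset.mem_singleton, hAdj]
    constructor
    · rintro (h | h)
      · exact h.2
      · exact absurd hv (hne v (h.2 ▸ hrC u))
    · exact fun h => Or.inl ⟨hv, h⟩
  have hdegc : ∀ c ∈ C, r c = c → deg F c = ((part c).filter (· ∈ I)).card := by
    intro c hc hrc
    rw [deg]
    congr 1
    ext u
    simp only [Finset.mem_filter, Finset.mem_univ, true_and, hAdj]
    constructor
    · rintro (h | h)
      · exact absurd h.1 (hne c hc)
      · have h1 : c ∈ part u := h.2 ▸ hrX u
        rw [← hpe c u h1]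
        exact ⟨(hpart u).2, h.1⟩
    · rintro ⟨h1, h2⟩
      exact Or.inr ⟨h2, by rw [← hre u c (hpe u c h1), hrc]⟩
  have hdeg0 : ∀ c ∈ C, r c ≠ c → deg F c = 0 := by
    intro c hc hrc
    rw [deg, Finset.card_eq_zero, Finset.filter_eq_empty_iff]
    intro u _ hu
    rcases (hAdj c u).1 hu with h | h
    · exact hne c hc h.1
    · have h1 : c ∈ part u := h.2 ▸ hrX u
      exact hrc ((hre c u (hpe c u h1)).symm.trans h.2.symm)
  refine ⟨F, ?_, ?_, hdegI, ?_, ?_⟩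
  · intro a b h
    rcases (hAdj a b).1 h with ⟨h1, rfl⟩ | ⟨h1, rfl⟩
    · exact hrI _ h1
    · exact (hrI _ h1).symm
  · intro a b h
    rcases (hAdj a b).1 h with ⟨h1, rfl⟩ | ⟨h1, rfl⟩
    · exact Or.inr ⟨h1, hrC _⟩
    · exact Or.inl ⟨hrC _, h1⟩
  · intro c hc
    by_cases hrc : r c = c
    · rw [hdegc c hc hrc]
      have hsub : (part c).filter (· ∈ I) ⊆ (part c).erase c := by
        intro u hu
        rw [Finset.mem_filter] at hu
        exact Finset.mem_erase.2 ⟨fun h => hne c hc (h ▸ hu.2), hu.1⟩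
      have h := Finset.card_le_card hsub
      rw [Finset.card_erase_of_mem (hpart c).2, (hgood _ (hpart c).1).1] at h
      exact h
    · rw [hdeg0 c hc hrc]; omega
  · -- A degree-one vertex is mapped to the other vertex of `C` in its part.
    have hex : ∀ c, ∃ c', c ∈ C → deg F c = 1 →
        c' ∈ C ∧ deg F c' = 0 ∧ r c' = c := by
      intro c
      by_cases hc : c ∈ C ∧ deg F c = 1
      · obtain ⟨hc, h1⟩ := hc
        have hrc : r c = c := by
          by_contra h
          rw [hdeg0 c hc h] at h1
          omega
        rw [hdegc c hc hrc] at h1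
        have h2 := Finset.card_filter_add_card_filter_not (s := part c) (· ∈ I)
        rw [h1, (hgood _ (hpart c).1).1] at h2
        obtain ⟨c', hc', hcc⟩ :=
          Finset.exists_mem_ne (s := (part c).filter (fun u => ¬ u ∈ I)) (by omega) c
        rw [Finset.mem_filter] at hc'
        have hC' := (hCI c').resolve_right hc'.2
        have hr' : r c' = c := by rw [← hre c' c (hpe c' c hc'.1), hrc]
        exact ⟨c', fun _ _ => ⟨hC', hdeg0 c' hC' (by rw [hr']; exact hcc.symm), hr'⟩⟩
      · exact ⟨c, fun h1 h2 => absurd ⟨h1, h2⟩ hc⟩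
    choose g hg using hex
    apply Finset.card_le_card_of_injOn g
    · intro c hc
      have hc' := Finset.mem_filter.1 hc
      have h := hg c hc'.1 hc'.2
      exact Finset.mem_filter.2 ⟨h.1, h.2.1⟩
    · intro c hc d hd hcd
      have hc' := Finset.mem_filter.1 hc
      have hd' := Finset.mem_filter.1 hd
      rw [← (hg c hc'.1 hc'.2).2.2, ← (hg d hd'.1 hd'.2).2.2, hcd]

theorem exists_partition_of_factor {V : Type*} [Fintype V] [DecidableEq V] (G : SimpleGraph V)
    (C I : Finset V) (hdisj : Disjoint C I) (hcover : C ∪ I = Finset.univ)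
    (hclique : ∀ a ∈ C, ∀ b ∈ C, a ≠ b → G.Adj a b)
    (h3 : 3 ∣ (C.card + I.card)) (F : SimpleGraph V) (hF : FeasibleFactor G C I F) :
    ∃ P, IsP3Partition G P := by
  obtain ⟨hFG, hbip, hI, hC, hle⟩ := hF
  have hCI : ∀ v, v ∈ C ∨ v ∈ I := fun v => by
    rw [← Finset.mem_union, hcover]; exact Finset.mem_univ v
  have hne : ∀ v, v ∈ C → v ∉ I := fun v h h' => Finset.disjoint_left.1 hdisj h h'
  have hadjI : ∀ c ∈ C, ∀ w, F.Adj c w → w ∈ I := by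
    intro c hc w h
    rcases hbip c w h with h | h
    · exact h.2
    · exact absurd h.1 (hne c hc)
  obtain ⟨e, he, heinj⟩ : ∃ e : V → V,
      (∀ c ∈ C, deg F c = 1 → e c ∈ C ∧ deg F (e c) = 0) ∧
      (∀ c ∈ C, ∀ d ∈ C, deg F c = 1 → deg F d = 1 → e c = e d → c = d) := by
    obtain ⟨f⟩ := Function.Embedding.nonempty_of_card_le
      (α := {v // v ∈ C.filter fun v => deg F v = 1})
      (β := {v // v ∈ C.filter fun v => deg F v = 0}) (by
        rw [Fintype.card_coe, Fintype.card_coe]; exact hle)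
    refine ⟨fun c => if h : c ∈ C.filter (fun v => deg F v = 1) then (f ⟨c, h⟩).1 else c, ?_, ?_⟩
    · intro c hc h1
      have h : c ∈ C.filter (fun v => deg F v = 1) := Finset.mem_filter.2 ⟨hc, h1⟩
      simp only [dif_pos h]
      exact Finset.mem_filter.1 (f ⟨c, h⟩).2
    · intro c hc d hd hc1 hd1 hcd
      have h : c ∈ C.filter (fun v => deg F v = 1) := Finset.mem_filter.2 ⟨hc, hc1⟩
      have h' : d ∈ C.filter (fun v => deg F v = 1) := Finset.mem_filter.2 ⟨hd, hd1⟩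
      simp only [dif_pos h, dif_pos h'] at hcd
      simpa using f.injective (Subtype.ext hcd)
  -- `X c` is the triple centred at a vertex `c` of positive degree.
  let X : V → Finset V := fun c =>
    insert c ((Finset.univ.filter fun u => F.Adj c u) ∪ if deg F c = 1 then {e c} else ∅)
  have hmem : ∀ c w, w ∈ X c ↔ w = c ∨ F.Adj c w ∨ (deg F c = 1 ∧ w = e c) := by
    intro c w
    by_cases h : deg F c = 1 <;> simp [X, h, or_comm (a := w = e c)]
  have hXcard : ∀ c ∈ C, deg F c ≠ 0 → (X c).card = 3 := by
    intro c hc h0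
    have h2 := hC c hc
    by_cases h1 : deg F c = 1
    · obtain ⟨hec, he0⟩ := he c hc h1
      have hd : Disjoint (Finset.univ.filter fun u => F.Adj c u) {e c} := by
        rw [Finset.disjoint_singleton_right, Finset.mem_filter]
        exact fun h => hne _ hec (hadjI c hc _ h.2)
      have hce : c ≠ e c := fun h => h0 (h ▸ he0)
      simp only [X, if_pos h1]
      rw [Finset.card_insert_of_notMem (by simp [hce]), Finset.card_union_of_disjoint hd]
      change deg F c + 1 + 1 = 3
      rw [h1]
    · simp only [X, if_neg h1, Finset.union_empty]
      rw [Finset.card_insert_of_notMem (by simp)]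
      change deg F c + 1 = 3
      omega
  let D := C.filter fun c => deg F c ≠ 0
  have hD : ∀ c, c ∈ D ↔ c ∈ C ∧ deg F c ≠ 0 := fun c => Finset.mem_filter
  have hXe : ∀ c ∈ D, ∀ d ∈ D, ∀ w, w ∈ X c → w ∈ X d → c = d := by
    intro c hcD d hdD w hwc hwd
    obtain ⟨hc, hc0⟩ := (hD c).1 hcD
    obtain ⟨hd, hd0⟩ := (hD d).1 hdD
    rcases (hmem c w).1 hwc with rfl | h | ⟨h, rfl⟩
    · rcases (hmem d w).1 hwd with rfl | h' | ⟨h', rfl⟩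
      · rfl
      · exact absurd (hadjI d hd w h') (hne w hc)
      · exact absurd (he d hd h').2 hc0
    · have hwI := hadjI c hc w h
      rcases (hmem d w).1 hwd with rfl | h' | ⟨h', rfl⟩
      · exact absurd hwI (hne w hd)
      · obtain ⟨p, hp⟩ := Finset.card_eq_one.1 (hI w hwI)
        have h1 : c ∈ Finset.univ.filter fun u => F.Adj w u := by simpa using h.symm
        have h2 : d ∈ Finset.univ.filter fun u => F.Adj w u := by simpa using h'.symm
        rw [hp, Finset.mem_singleton] at h1 h2
        rw [h1, h2]
      · exact absurd hwI (hne _ (he d hd h').1)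
    · rcases (hmem d (e c)).1 hwd with h' | h' | ⟨h', h''⟩
      · exact absurd (h' ▸ (he c hc h).2) hd0
      · exact absurd (hadjI d hd _ h') (hne _ (he c hc h).1)
      · exact heinj c hc d hd h h' h''
  have hXgood : ∀ c ∈ D, IsP3Triple G (X c) := by
    intro c hcD
    obtain ⟨hc, hc0⟩ := (hD c).1 hcD
    apply isP3Triple_of_center (hXcard c hc hc0) ((hmem c c).2 (Or.inl rfl))
    intro v hv hvc
    rcases (hmem c v).1 hv with h | h | ⟨h, rfl⟩
    · exact absurd h hvc
    · exact hFG h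
    · exact hclique c hc _ (he c hc h).1 hvc.symm
  have hU : (D.biUnion X).card = 3 * D.card := by
    rw [Finset.card_biUnion, Finset.sum_congr rfl fun c hc =>
      hXcard c ((hD c).1 hc).1 ((hD c).1 hc).2]
    · simp [mul_comm]
    · intro c hc d hd hcd
      exact Finset.disjoint_left.2 fun w h h' => hcd (hXe c hc d hd w h h')
  have hRC : ∀ v ∈ Finset.univ \ D.biUnion X, v ∈ C := by
    intro v hv
    refine (hCI v).resolve_right fun hvI => (Finset.mem_sdiff.1 hv).2 ?_
    obtain ⟨c, hc⟩ := Finset.card_eq_one.1 (hI v hvI)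
    have hvc : F.Adj v c := by
      have : c ∈ Finset.univ.filter fun u => F.Adj v u := by simp [hc]
      simpa using this
    have hcC : c ∈ C := by
      rcases hbip v c hvc with h | h
      · exact absurd hvI (hne v h.1)
      · exact h.2
    have hc0 : deg F c ≠ 0 := by
      rw [deg, ← Nat.pos_iff_ne_zero, Finset.card_pos]
      exact ⟨v, by simpa using hvc.symm⟩
    exact Finset.mem_biUnion.2
      ⟨c, (hD c).2 ⟨hcC, hc0⟩, (hmem c v).2 (Or.inr (Or.inl hvc.symm))⟩
  have hRcard : ∃ n, (Finset.univ \ D.biUnion X).card = 3 * n := by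
    obtain ⟨k, hk⟩ := h3
    rw [← Finset.card_union_of_disjoint hdisj, hcover] at hk
    refine ⟨k - D.card, ?_⟩
    rw [Finset.card_sdiff_of_subset (Finset.subset_univ _), hk, hU]
    omega
  obtain ⟨n, hn⟩ := hRcard
  obtain ⟨P, hP, hPu⟩ := exists_triples_of_clique G n _ hn
    fun a ha b hb => hclique a (hRC a ha) b (hRC b hb)
  refine ⟨D.image X ∪ P, ?_, ?_⟩
  · intro Y hY
    rcases Finset.mem_union.1 hY with h | h
    · obtain ⟨c, hc, rfl⟩ := Finset.mem_image.1 h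
      exact hXgood c hc
    · exact (hP Y h).1
  · intro v
    by_cases hv : v ∈ D.biUnion X
    · obtain ⟨c, hc, hvc⟩ := Finset.mem_biUnion.1 hv
      refine ⟨X c, ⟨Finset.mem_union_left _ (Finset.mem_image_of_mem X hc), hvc⟩, ?_⟩
      rintro Y ⟨hY, hvY⟩
      rcases Finset.mem_union.1 hY with h | h
      · obtain ⟨d, hd, rfl⟩ := Finset.mem_image.1 h
        rw [hXe c hc d hd v hvc hvY]
      · exact absurd hv (Finset.mem_sdiff.1 ((hP Y h).2 hvY)).2
    · obtain ⟨Z, ⟨hZ, hvZ⟩, hZu⟩ := hPu v (Finset.mem_sdiff.2 ⟨Finset.mem_univ v, hv⟩)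
      refine ⟨Z, ⟨Finset.mem_union_right _ hZ, hvZ⟩, ?_⟩
      rintro Y ⟨hY, hvY⟩
      rcases Finset.mem_union.1 hY with h | h
      · obtain ⟨d, hd, rfl⟩ := Finset.mem_image.1 h
        exact absurd (Finset.mem_biUnion.2 ⟨d, hd, hvY⟩) hv
      · exact hZu Y ⟨h, hvY⟩

/-- A split graph `G` (clique `C`, independent set `I`, with `|C| + |I|`
divisible by three) admits a `P₃`-partition if and only if the bipartite graph
`B` of its edges between `C` and `I` has a feasible factor. -/
theorem stmt6 {V : Type*} [Fintype V] [DecidableEq V] (G : SimpleGraph V)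
    (C I : Finset V) (hdisj : Disjoint C I) (hcover : C ∪ I = Finset.univ)
    (hclique : ∀ a ∈ C, ∀ b ∈ C, a ≠ b → G.Adj a b)
    (hindep : ∀ a ∈ I, ∀ b ∈ I, ¬ G.Adj a b)
    (h3 : 3 ∣ (C.card + I.card)) :
    (∃ P, IsP3Partition G P) ↔ ∃ F, FeasibleFactor G C I F := by
  exact ⟨fun ⟨P, hP⟩ => exists_factor_of_partition G C I hdisj hcover hindep P hP,
    fun ⟨F, hF⟩ => exists_partition_of_factor G C I hdisj hcover hclique h3 F hF⟩
end

section
/- Let G = (C ∪ I, E_C ∪ E) be a split graph with |C| + |I| a multiple of 3 and 2|C| − |I| ≥ 0, and let B = (C ∪ I, E) be the bipartite graph of edges between C and I. Write (2|C| − |I|)/3 = 2q + r with q ≥ 0 an integer and r ∈ {0, 1}. Then in any feasible factor F of B, the number of degree-one vertices of C in F equals 2i + r for some integer i with 0 ≤ i ≤ q. -/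
/-!
Let `n₀`, `n₁`, `n₂` be the numbers of vertices of `C` of degree `0`, `1`, `2` in `F`. They sum to
`|C|`, and counting the edges of `F` from both sides gives `n₁ + 2 n₂ = |I|`
(`sum_deg_eq_card`). Hence `2 n₀ + n₁ = 2|C| - |I| = 3 (2q + r)`. This makes `n₁` congruent to `r`
modulo `2`, and `n₁ ≤ n₀` gives `3 n₁ ≤ 3 (2q + r)`.
-/

open scoped Classical

/-- Double counting: every edge of `F` has one end in each part, and each vertex of `I` lies on
exactly one edge, so the degrees over `C` add up to `|I|`. -/
theorem sum_deg_eq_card {V : Type*} [Fintype V] (C I : Finset V) (hdisj : Disjoint C I)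
    (F : SimpleGraph V) (hbip : ∀ a b, F.Adj a b → (a ∈ C ∧ b ∈ I) ∨ (a ∈ I ∧ b ∈ C))
    (hI : ∀ v ∈ I, deg F v = 1) : ∑ v ∈ C, deg F v = I.card := by
  have hdis : ∀ a, a ∈ C → a ∉ I := fun a ha hb => Finset.disjoint_left.mp hdisj ha hb
  have hdouble := Finset.sum_card_bipartiteAbove_eq_sum_card_bipartiteBelow
    (s := C) (t := I) F.Adj
  have hC : ∀ v ∈ C, deg F v = (Finset.bipartiteAbove F.Adj I v).card := by
    intro v hv
    unfold deg Finset.bipartiteAbove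
    congr 1
    ext u
    have := hbip v u
    have := hdis v hv
    simp only [Finset.mem_filter, Finset.mem_univ, true_and]
    tauto
  have hBelow : ∀ v ∈ I, (Finset.bipartiteBelow F.Adj C v).card = 1 := by
    intro v hv
    rw [← hI v hv]
    unfold deg Finset.bipartiteBelow
    congr 1
    ext u
    have := hbip u v
    have := hdis v
    simp only [Finset.mem_filter, Finset.mem_univ, true_and, F.adj_comm v u]
    tauto
  rw [Finset.sum_congr rfl hC, hdouble, Finset.sum_congr rfl hBelow]
  simp

/-- Writing `(2|C| - |I|)/3 = 2q + r` with `r ∈ {0,1}`, in any feasible factor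
of `B` the number of degree-one vertices of `C` equals `2i + r` for some
`0 ≤ i ≤ q`. -/
theorem stmt8 {V : Type*} [Fintype V] [DecidableEq V] (G : SimpleGraph V)
    (C I : Finset V) (hdisj : Disjoint C I) (hcover : C ∪ I = Finset.univ)
    (hclique : ∀ a ∈ C, ∀ b ∈ C, a ≠ b → G.Adj a b)
    (hindep : ∀ a ∈ I, ∀ b ∈ I, ¬ G.Adj a b)
    (h3 : 3 ∣ (C.card + I.card)) (hCI : I.card ≤ 2 * C.card)
    (q r : ℕ) (hr : r ≤ 1) (hqr : 2 * C.card = I.card + 3 * (2 * q + r))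
    (F : SimpleGraph V) (hF : FeasibleFactor G C I F) :
    ∃ i ≤ q, (C.filter fun v => deg F v = 1).card = 2 * i + r := by
  obtain ⟨-, hbip, hI, hC, h10⟩ := hF
  have hsum := sum_deg_eq_card C I hdisj F hbip hI
  -- `2 n₀ + n₁ + ∑ deg = 2|C|`, since each vertex of `C` contributes `2` to the left-hand side.
  have hcount : 2 * (C.filter fun v => deg F v = 0).card + (C.filter fun v => deg F v = 1).card
      + ∑ v ∈ C, deg F v = 2 * C.card := by
    rw [Finset.card_filter, Finset.card_filter, Finset.mul_sum, ← Finset.sum_add_distrib,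
      ← Finset.sum_add_distrib, mul_comm 2 C.card, ← smul_eq_mul C.card, ← Finset.sum_const]
    refine Finset.sum_congr rfl fun v hv => ?_
    have := hC v hv
    split_ifs <;> omega
  exact ⟨((C.filter fun v => deg F v = 1).card - r) / 2, by omega, by omega⟩
end

section
/- Let G = (C ∪ I, E_C ∪ E) be a split graph with |C| + |I| a multiple of 3 and 2|C| − |I| ≥ 0, let B = (C ∪ I, E) be the bipartite graph of edges between C and I, and let B' be obtained from B by adding one new vertex z adjacent to all vertices of C. Write (2|C| − |I|)/3 = 2q + r with q ≥ 0 and r ∈ {0, 1}. Then B admits a feasible factor if and only if B' has a factor in which every vertex of I has degree one, every vertex of C has degree zero or two, and z has degree at most (2|C| − |I|)/3. Moreover, in such a factor of B', the degree of z equals 2i + r for some integer i with 0 ≤ i ≤ q. -/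
/-!
Deleting `z` from a factor of `B'` and joining `z` to the degree-one vertices of `C` are the two
directions of a correspondence under which `deg z` is the number `n₁` of degree-one vertices of `C`:
a vertex of `C` of degree `0` or `2` in `B'` has degree one in `B` exactly when it is adjacent to `z`
(`deg_inl`, `deg_z`, `deg_comap_eq_one_iff`).

Write `n₀` for the number of degree-zero vertices of `C`. Counting the edges of a factor of `B` from
both sides gives `2 n₀ + n₁ = 2|C| - |I| = 3 (2q + r)` (`two_mul_zeros_add_ones`). Hence `n₁ ≤ n₀` is
equivalent to `n₁ ≤ 2q + r`, which is the bound on `deg z`, and `n₁` has the parity of `r`.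
-/

open scoped Classical

/-- The graph `B'` obtained from the bipartite graph `B` of edges of `G`
between `C` and `I` by adding a new vertex `z = Sum.inr ()` adjacent to all
vertices of `C`. -/
def addZ {V : Type*} (G : SimpleGraph V) (C I : Finset V) :
    SimpleGraph (V ⊕ Unit) :=
  SimpleGraph.fromRel fun x y =>
    (∃ a b : V, x = Sum.inl a ∧ y = Sum.inl b ∧ G.Adj a b ∧
      ((a ∈ C ∧ b ∈ I) ∨ (a ∈ I ∧ b ∈ C))) ∨
    (∃ c ∈ C, x = Sum.inr () ∧ y = Sum.inl c)

/-- A factor of `B'` in which every vertex of `I` has degree one, every vertex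
of `C` has degree zero or two, and `z` has degree at most `d`. -/
def GoodFactor {V : Type*} [Fintype V] [DecidableEq V] (G : SimpleGraph V)
    (C I : Finset V) (d : ℕ) (F' : SimpleGraph (V ⊕ Unit)) : Prop :=
  F' ≤ addZ G C I ∧
  (∀ v ∈ I, deg F' (Sum.inl v) = 1) ∧
  (∀ v ∈ C, deg F' (Sum.inl v) = 0 ∨ deg F' (Sum.inl v) = 2) ∧
  deg F' (Sum.inr ()) ≤ d

section Helpers

variable {V : Type*}

lemma addZ_inl_inl {G : SimpleGraph V} {C I : Finset V} {a b : V} :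
    (addZ G C I).Adj (Sum.inl a) (Sum.inl b) ↔
      G.Adj a b ∧ ((a ∈ C ∧ b ∈ I) ∨ (a ∈ I ∧ b ∈ C)) := by
  have hne : G.Adj a b → a ≠ b := G.ne_of_adj
  have hsymm := G.adj_comm a b
  simp only [addZ, SimpleGraph.fromRel_adj, ne_eq, Sum.inl.injEq, reduceCtorEq, false_and,
    and_false, exists_false, or_false, exists_and_left, exists_eq_left']
  tauto

lemma addZ_inr_inl {G : SimpleGraph V} {C I : Finset V} {c : V} :
    (addZ G C I).Adj (Sum.inr ()) (Sum.inl c) ↔ c ∈ C := by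
  simp [addZ]

variable [Fintype V]

lemma deg_eq_sum (F : SimpleGraph V) (v : V) :
    deg F v = ∑ u, if F.Adj v u then 1 else 0 := by
  rw [deg, Finset.card_filter]

/-- Counting the edges of a factor of `B` from both sides, `∑ c ∈ C, deg c = |I|`, so that the
deficiencies `2 - deg c` sum to `2|C| - |I|`. -/
lemma two_mul_zeros_add_ones (F : SimpleGraph V) (C I : Finset V)
    (hdisj : Disjoint C I)
    (hB : ∀ a b, F.Adj a b → (a ∈ C ∧ b ∈ I) ∨ (a ∈ I ∧ b ∈ C))
    (hI : ∀ v ∈ I, deg F v = 1) (hC : ∀ v ∈ C, deg F v ≤ 2) :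
    2 * (C.filter fun v => deg F v = 0).card + (C.filter fun v => deg F v = 1).card + I.card
      = 2 * C.card := by
  have hdegC : ∀ c ∈ C, deg F c = ∑ v ∈ I, if F.Adj c v then 1 else 0 := by
    intro c hc
    rw [deg_eq_sum]
    symm
    apply Finset.sum_subset (Finset.subset_univ _)
    intro x _ hx
    rw [if_neg]
    intro h
    rcases hB _ _ h with h | h
    · exact hx h.2
    · exact Finset.disjoint_left.mp hdisj hc h.1
  have hdegI : ∀ v ∈ I, deg F v = ∑ c ∈ C, if F.Adj c v then 1 else 0 := by
    intro v hv
    rw [deg_eq_sum]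
    simp_rw [F.adj_comm v]
    symm
    apply Finset.sum_subset (Finset.subset_univ _)
    intro x _ hx
    rw [if_neg]
    intro h
    rcases hB _ _ h with h | h
    · exact hx h.1
    · exact Finset.disjoint_left.mp hdisj h.2 hv
  have hsum : ∑ c ∈ C, deg F c = I.card := by
    rw [Finset.sum_congr rfl hdegC, Finset.sum_comm, ← Finset.sum_congr rfl hdegI,
      Finset.sum_congr rfl hI]
    simp
  rw [← hsum, Finset.card_filter, Finset.card_filter, Finset.mul_sum, ← Finset.sum_add_distrib,
    ← Finset.sum_add_distrib, Finset.card_eq_sum_ones, Finset.mul_sum]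
  apply Finset.sum_congr rfl
  intro c hc
  have h2 := hC c hc
  interval_cases deg F c <;> simp

lemma deg_inl (F' : SimpleGraph (V ⊕ Unit)) (v : V) :
    deg F' (Sum.inl v) = deg (F'.comap Sum.inl) v
      + if F'.Adj (Sum.inr ()) (Sum.inl v) then 1 else 0 := by
  rw [deg_eq_sum, deg_eq_sum, Fintype.sum_sum_type, F'.adj_comm (Sum.inr ())]
  simp only [SimpleGraph.comap_adj, Finset.univ_unique, Finset.sum_singleton, PUnit.default_eq_unit]

lemma deg_z (F' : SimpleGraph (V ⊕ Unit)) (C : Finset V)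
    (h : ∀ v, F'.Adj (Sum.inr ()) (Sum.inl v) → v ∈ C) :
    deg F' (Sum.inr ()) = (C.filter fun v => F'.Adj (Sum.inr ()) (Sum.inl v)).card := by
  have hC : (C.filter fun v => F'.Adj (Sum.inr ()) (Sum.inl v))
      = Finset.univ.filter fun v => F'.Adj (Sum.inr ()) (Sum.inl v) := by
    ext v
    simpa using h v
  rw [hC, deg_eq_sum, Fintype.sum_sum_type, Finset.card_filter]
  simp

lemma deg_comap_eq_one_iff (F' : SimpleGraph (V ⊕ Unit)) (v : V)
    (h : deg F' (Sum.inl v) = 0 ∨ deg F' (Sum.inl v) = 2) :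
    deg (F'.comap Sum.inl) v = 1 ↔ F'.Adj (Sum.inr ()) (Sum.inl v) := by
  have hsum := deg_inl F' v
  by_cases hz : F'.Adj (Sum.inr ()) (Sum.inl v)
  · rw [if_pos hz] at hsum
    exact iff_of_true (by omega) hz
  · rw [if_neg hz] at hsum
    exact iff_of_false (by omega) hz

/-- The factor of `B'` obtained from a factor `F` of `B` by joining `z` to the vertices of `C` of
degree one in `F`. -/
def joinZ (F : SimpleGraph V) (C : Finset V) : SimpleGraph (V ⊕ Unit) where
  Adj
    | Sum.inl a, Sum.inl b => F.Adj a b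
    | Sum.inl a, Sum.inr _ => a ∈ C ∧ deg F a = 1
    | Sum.inr _, Sum.inl a => a ∈ C ∧ deg F a = 1
    | Sum.inr _, Sum.inr _ => False
  symm := ⟨by
    rintro (a | a) (b | b) h
    · exact F.adj_symm h
    · exact h
    · exact h
    · exact h⟩
  loopless := ⟨by
    rintro (a | a) h
    · exact F.loopless.irrefl a h
    · exact h⟩

lemma comap_joinZ (F : SimpleGraph V) (C : Finset V) : (joinZ F C).comap Sum.inl = F := rfl

lemma joinZ_inr_inl (F : SimpleGraph V) (C : Finset V) (v : V) :
    (joinZ F C).Adj (Sum.inr ()) (Sum.inl v) ↔ v ∈ C ∧ deg F v = 1 := Iff.rfl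

/-- Joining `z` to the degree-one vertices of a feasible factor gives a good factor, with
`deg z = n₁ ≤ d` because `3 n₁ ≤ 2 n₀ + n₁ = 3 d`. -/
lemma goodFactor_joinZ [DecidableEq V] {G : SimpleGraph V} {C I : Finset V} {F : SimpleGraph V}
    {d : ℕ} (hdisj : Disjoint C I) (hd : 2 * C.card = I.card + 3 * d)
    (hF : FeasibleFactor G C I F) : GoodFactor G C I d (joinZ F C) := by
  obtain ⟨hle, hB, hI, hC, h10⟩ := hF
  have hcount := two_mul_zeros_add_ones F C I hdisj hB hI hC
  refine ⟨?_, ?_, ?_, ?_⟩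
  · rintro (a | ⟨⟩) (b | ⟨⟩) h
    · exact addZ_inl_inl.mpr ⟨hle h, hB _ _ h⟩
    · exact (addZ_inr_inl.mpr h.1).symm
    · exact addZ_inr_inl.mpr h.1
    · exact h.elim
  · intro v hv
    rw [deg_inl, comap_joinZ, hI v hv, joinZ_inr_inl,
      if_neg fun h => Finset.disjoint_left.mp hdisj h.1 hv]
  · intro v hv
    have h2 := hC v hv
    rw [deg_inl, comap_joinZ, joinZ_inr_inl]
    simp only [hv, true_and]
    split_ifs <;> omega
  · rw [deg_z (joinZ F C) C fun v h => h.1]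
    have : (C.filter fun v => (joinZ F C).Adj (Sum.inr ()) (Sum.inl v))
        = C.filter fun v => deg F v = 1 := by
      ext v
      simp only [Finset.mem_filter, joinZ_inr_inl]
      tauto
    rw [this]
    omega

/-- Deleting `z` from a good factor gives a feasible factor. The parity of `deg z = n₁` is read off
from the same count, `2 n₀ + n₁ = 3 d`. -/
lemma feasibleFactor_comap [DecidableEq V] {G : SimpleGraph V} {C I : Finset V}
    {F' : SimpleGraph (V ⊕ Unit)} {d : ℕ} (hdisj : Disjoint C I)
    (hd : 2 * C.card = I.card + 3 * d) (hF' : GoodFactor G C I d F') :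
    FeasibleFactor G C I (F'.comap Sum.inl) ∧ deg F' (Sum.inr ()) % 2 = d % 2 := by
  obtain ⟨hle, hI', hC', hz⟩ := hF'
  have hadj : ∀ a b, (F'.comap Sum.inl).Adj a b →
      G.Adj a b ∧ ((a ∈ C ∧ b ∈ I) ∨ (a ∈ I ∧ b ∈ C)) := fun a b h => addZ_inl_inl.mp (hle h)
  have hzC : ∀ v, F'.Adj (Sum.inr ()) (Sum.inl v) → v ∈ C := fun v h => addZ_inr_inl.mp (hle h)
  have hB := fun a b h => (hadj a b h).2
  have hI : ∀ v ∈ I, deg (F'.comap Sum.inl) v = 1 := by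
    intro v hv
    have h := hI' v hv
    rwa [deg_inl, if_neg fun h => Finset.disjoint_left.mp hdisj (hzC v h) hv] at h
  have hC : ∀ v ∈ C, deg (F'.comap Sum.inl) v ≤ 2 := by
    intro v hv
    have h := hC' v hv
    rw [deg_inl] at h
    omega
  have hcount := two_mul_zeros_add_ones _ C I hdisj hB hI hC
  have hones : deg F' (Sum.inr ()) = (C.filter fun v => deg (F'.comap Sum.inl) v = 1).card := by
    rw [deg_z F' C hzC]
    congr 1
    apply Finset.filter_congr
    intro v hv
    exact (deg_comap_eq_one_iff F' v (hC' v hv)).symm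
  refine ⟨⟨fun a b h => (hadj a b h).1, hB, hI, hC, ?_⟩, ?_⟩ <;> omega

end Helpers

/-- `B` admits a feasible factor iff `B'` (with the extra vertex `z` adjacent
to all of `C`) has a factor with all `I`-degrees one, all `C`-degrees zero or
two, and `z` of degree at most `(2|C| - |I|)/3 = 2q + r`; moreover in any such
factor of `B'` the degree of `z` equals `2i + r` for some `0 ≤ i ≤ q`. -/
theorem stmt9 {V : Type*} [Fintype V] [DecidableEq V] (G : SimpleGraph V)
    (C I : Finset V) (hdisj : Disjoint C I) (hcover : C ∪ I = Finset.univ)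
    (hclique : ∀ a ∈ C, ∀ b ∈ C, a ≠ b → G.Adj a b)
    (hindep : ∀ a ∈ I, ∀ b ∈ I, ¬ G.Adj a b)
    (h3 : 3 ∣ (C.card + I.card)) (hCI : I.card ≤ 2 * C.card)
    (q r : ℕ) (hr : r ≤ 1) (hqr : 2 * C.card = I.card + 3 * (2 * q + r)) :
    ((∃ F, FeasibleFactor G C I F) ↔ ∃ F', GoodFactor G C I (2 * q + r) F') ∧
    (∀ F', GoodFactor G C I (2 * q + r) F' →
      ∃ i ≤ q, deg F' (Sum.inr ()) = 2 * i + r) := by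
  refine ⟨⟨?_, ?_⟩, ?_⟩
  · rintro ⟨F, hF⟩
    exact ⟨_, goodFactor_joinZ hdisj hqr hF⟩
  · rintro ⟨F', hF'⟩
    exact ⟨_, (feasibleFactor_comap hdisj hqr hF').1⟩
  · intro F' hF'
    have hpar := (feasibleFactor_comap hdisj hqr hF').2
    have hz := hF'.2.2.2
    exact ⟨(deg F' (Sum.inr ()) - r) / 2, by omega, by omega⟩
end
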